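/- arXiv:1911.11402 — 3 statements merged into one kernel-verified Lean document; each statement's English description precedes it below -/
import Mathlib

section
/- Let 1/3 < λ < 1, let a : [0,1] → ℝ be Lipschitz continuous, let g ∈ C^λ₀([0,1];ℝ), and let f : ℝ² → ℝ be continuously differentiable in the first variable and three times continuously differentiable in the second variable, with f, ∂₁f, ∂₂f, ∂₂²f, ∂₂³f all continuous on ℝ². Then for every t ∈ [0,1] the Russo–Vallois symmetric integral ∫₀^t ∂₂f(a_u,g_u) d°g_u exists, and the change-of-variables formula f(a_t,g_t) = f(a_0,g_0) + ∫₀^t ∂₁f(a_u,g_u) a'(u) du + ∫₀^t ∂₂f(a_u,g_u) d°g_u holds, where a' denotes the almost-everywhere defined derivative of the Lipschitz function a. -/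
/-- The Russo–Vallois symmetric integral `∫₀ᵗ f dᵒg = I`: the limit, as `ε ↓ 0`, of
`∫₀ᵗ ((f((u+ε)∧t) + f u)/2) · ((g((u+ε)∧t) − g u)/ε) du`. -/
def HasSymmInt (f g : ℝ → ℝ) (t : ℝ) (I : ℝ) : Prop :=
  Filter.Tendsto
    (fun ε : ℝ =>
      ∫ u in (0:ℝ)..t, ((f (min (u + ε) t) + f u) / 2) * ((g (min (u + ε) t) - g u) / ε))
    (nhdsWithin 0 (Set.Ioi 0)) (nhds I)

open Set Filter Topology MeasureTheory Function
open scoped NNReal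

/-!
Extend `a` and `g` from `[0, t]` to functions `A`, `G` constant outside it, so that stopping at `t`
disappears from the integrand. The increment of `f(A, G)` over a step `ε` is the sum of an increment
in the first variable and one in the second. Divided by `ε` and integrated over `[0, t]`, the total
increments tend to `f(A_t, G_t) - f(A_0, G_0)` by continuity, and those in the first variable tend
to `∫ ∂₁f(A, G) A'` by dominated convergence.

The increment in the second variable is compared with the symmetric integrand. The trapezoid rule
costs `|ΔG|³ = O(ε ^ (3λ))`, and evaluating one of its endpoints at `A_{u+ε}` instead of `A_u` costs
`|∂₂f(A_{u+ε}, ·) - ∂₂f(A_u, ·)| |ΔG|`. No mixed derivative of `f` is available, but interpolating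
`∂₂` between `f(x', ·) - f(x, ·) = O(|x' - x|)` and the bounded `∂₂³f` (Landau–Kolmogorov) makes
`∂₂f` `2/3`-Hölder in the first variable, so this cost is `O(ε ^ (2/3 + λ))`. Both costs are
`o(ε)` because `λ > 1/3`.
-/

section Calculus

variable {E : Type*} [NormedAddCommGroup E] [NormedSpace ℝ E] {φ φ₁ φ₂ φ₃ : ℝ → E} {B y z : ℝ}

lemma norm_sub_le_mul_pow_of_norm_deriv_le {C : ℝ} (n : ℕ)
    (hφ : ∀ s ∈ uIcc y z, HasDerivAt φ (φ₁ s) s) (hC : ∀ s ∈ uIcc y z, ‖φ₁ s‖ ≤ C * |s - y| ^ n) :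
    ‖φ z - φ y‖ ≤ C * |z - y| ^ (n + 1) := by
  rcases eq_or_ne z y with rfl | hne
  · simp
  have hpos : 0 < |z - y| ^ n := pow_pos (abs_pos.2 (sub_ne_zero.2 hne)) n
  have hC0 : 0 ≤ C :=
    nonneg_of_mul_nonneg_left ((norm_nonneg _).trans (hC z right_mem_uIcc)) hpos
  have hbound : ∀ s ∈ uIcc y z, ‖φ₁ s‖ ≤ C * |z - y| ^ n := fun s hs => by
    refine (hC s hs).trans ?_
    gcongr ?_ * ?_ ^ n
    simpa [abs_sub_comm] using abs_sub_left_of_mem_uIcc hs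
  calc ‖φ z - φ y‖ ≤ C * |z - y| ^ n * ‖z - y‖ :=
        (convex_uIcc y z).norm_image_sub_le_of_norm_hasDerivWithin_le
          (fun s hs => (hφ s hs).hasDerivWithinAt) hbound left_mem_uIcc right_mem_uIcc
    _ = C * |z - y| ^ (n + 1) := by rw [Real.norm_eq_abs]; ring

lemma norm_sub_sub_trapezoid_le (h₁ : ∀ s ∈ uIcc y z, HasDerivAt φ (φ₁ s) s)
    (h₂ : ∀ s ∈ uIcc y z, HasDerivAt φ₁ (φ₂ s) s) (h₃ : ∀ s ∈ uIcc y z, HasDerivAt φ₂ (φ₃ s) s)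
    (hB : ∀ s ∈ uIcc y z, ‖φ₃ s‖ ≤ B) :
    ‖φ z - φ y - ((z - y) / 2) • (φ₁ z + φ₁ y)‖ ≤ B / 2 * |z - y| ^ 3 := by
  let T : ℝ → E := fun s => φ s - φ y - ((s - y) / 2) • (φ₁ s + φ₁ y)
  let T₁ : ℝ → E := fun s => (2⁻¹ : ℝ) • (φ₁ s - φ₁ y) - ((s - y) / 2) • φ₂ s
  have hlin : ∀ s, HasDerivAt (fun s : ℝ => (s - y) / 2) (1 / 2) s := fun s =>
    ((hasDerivAt_id s).sub_const y).div_const 2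
  have hT : ∀ s ∈ uIcc y z, HasDerivAt T (T₁ s) s := fun s hs => by
    refine (((h₁ s hs).sub_const (φ y)).sub
      ((hlin s).smul ((h₂ s hs).add_const (φ₁ y)))).congr_deriv ?_
    simp only [T₁]; module
  have hT₁ : ∀ s ∈ uIcc y z, HasDerivAt T₁ (-((s - y) / 2) • φ₃ s) s := fun s hs => by
    refine ((((h₂ s hs).sub_const (φ₁ y)).const_smul (2⁻¹ : ℝ)).sub
      ((hlin s).smul (h₃ s hs))).congr_deriv ?_
    module
  have bound₂ : ∀ s ∈ uIcc y z, ‖-((s - y) / 2) • φ₃ s‖ ≤ B / 2 * |s - y| ^ 1 := fun s hs => by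
    rw [norm_smul, norm_neg, Real.norm_eq_abs, abs_div, abs_two]
    linarith [mul_le_mul_of_nonneg_left (hB s hs) (abs_nonneg (s - y))]
  have bound₁ : ∀ s ∈ uIcc y z, ‖T₁ s‖ ≤ B / 2 * |s - y| ^ 2 := fun s hs => by
    have hsub : uIcc y s ⊆ uIcc y z := uIcc_subset_uIcc_left hs
    simpa [T₁] using norm_sub_le_mul_pow_of_norm_deriv_le 1 (fun r hr => hT₁ r (hsub hr))
      fun r hr => bound₂ r (hsub hr)
  simpa [T] using norm_sub_le_mul_pow_of_norm_deriv_le 2 hT bound₁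

lemma norm_sub_sub_two_smul_deriv_le {δ : ℝ} (hδ : 0 ≤ δ)
    (h₁ : ∀ s ∈ Icc (y - δ) (y + δ), HasDerivAt φ (φ₁ s) s)
    (h₂ : ∀ s ∈ Icc (y - δ) (y + δ), HasDerivAt φ₁ (φ₂ s) s)
    (h₃ : ∀ s ∈ Icc (y - δ) (y + δ), HasDerivAt φ₂ (φ₃ s) s)
    (hB : ∀ s ∈ Icc (y - δ) (y + δ), ‖φ₃ s‖ ≤ B) :
    ‖φ (y + δ) - φ (y - δ) - (2 * δ) • φ₁ y‖ ≤ 2 * B * δ ^ 3 := by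
  let S : ℝ → E := fun s => φ (y + s) - φ (y - s) - (2 * s) • φ₁ y
  let S₁ : ℝ → E := fun s => φ₁ (y + s) + φ₁ (y - s) - (2 : ℝ) • φ₁ y
  let S₂ : ℝ → E := fun s => φ₂ (y + s) - φ₂ (y - s)
  have hmem : ∀ s ∈ uIcc 0 δ, y + s ∈ Icc (y - δ) (y + δ) ∧ y - s ∈ Icc (y - δ) (y + δ) := by
    intro s hs
    rw [uIcc_of_le hδ] at hs
    constructor <;> constructor <;> linarith [hs.1, hs.2]
  have hS : ∀ s ∈ uIcc 0 δ, HasDerivAt S (S₁ s) s := fun s hs => by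
    refine ((((h₁ _ (hmem s hs).1).comp_const_add y s).sub
      ((h₁ _ (hmem s hs).2).comp_const_sub y s)).sub
        (((hasDerivAt_id s).const_mul 2).smul_const (φ₁ y))).congr_deriv ?_
    simp only [S₁]; module
  have hS₁ : ∀ s ∈ uIcc 0 δ, HasDerivAt S₁ (S₂ s) s := fun s hs => by
    refine ((((h₂ _ (hmem s hs).1).comp_const_add y s).add
      ((h₂ _ (hmem s hs).2).comp_const_sub y s)).sub_const ((2 : ℝ) • φ₁ y)).congr_deriv ?_
    simp only [S₂]; module
  have hS₂ : ∀ s ∈ uIcc 0 δ, HasDerivAt S₂ (φ₃ (y + s) + φ₃ (y - s)) s := fun s hs => by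
    refine (((h₃ _ (hmem s hs).1).comp_const_add y s).sub
      ((h₃ _ (hmem s hs).2).comp_const_sub y s)).congr_deriv ?_
    module
  have bound₃ : ∀ s ∈ uIcc 0 δ, ‖φ₃ (y + s) + φ₃ (y - s)‖ ≤ 2 * B * |s - 0| ^ 0 := fun s hs => by
    rw [pow_zero]
    linarith [norm_add_le (φ₃ (y + s)) (φ₃ (y - s)), hB _ (hmem s hs).1, hB _ (hmem s hs).2]
  have bound₂ : ∀ s ∈ uIcc 0 δ, ‖S₂ s‖ ≤ 2 * B * |s - 0| ^ 1 := fun s hs => by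
    have hsub : uIcc 0 s ⊆ uIcc 0 δ := uIcc_subset_uIcc_left hs
    simpa [S₂] using norm_sub_le_mul_pow_of_norm_deriv_le 0 (fun r hr => hS₂ r (hsub hr))
      fun r hr => bound₃ r (hsub hr)
  have bound₁ : ∀ s ∈ uIcc 0 δ, ‖S₁ s‖ ≤ 2 * B * |s - 0| ^ 2 := fun s hs => by
    have hsub : uIcc 0 s ⊆ uIcc 0 δ := uIcc_subset_uIcc_left hs
    simpa [S₁, two_smul] using norm_sub_le_mul_pow_of_norm_deriv_le 1 (fun r hr => hS₁ r (hsub hr))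
      fun r hr => bound₂ r (hsub hr)
  simpa [S, abs_of_nonneg hδ] using norm_sub_le_mul_pow_of_norm_deriv_le 2 hS bound₁

lemma norm_deriv_le_div_add_mul_sq {δ η : ℝ} (hδ : 0 < δ)
    (h₁ : ∀ s ∈ Icc (y - δ) (y + δ), HasDerivAt φ (φ₁ s) s)
    (h₂ : ∀ s ∈ Icc (y - δ) (y + δ), HasDerivAt φ₁ (φ₂ s) s)
    (h₃ : ∀ s ∈ Icc (y - δ) (y + δ), HasDerivAt φ₂ (φ₃ s) s)
    (hη : ∀ s ∈ Icc (y - δ) (y + δ), ‖φ s‖ ≤ η)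
    (hB : ∀ s ∈ Icc (y - δ) (y + δ), ‖φ₃ s‖ ≤ B) :
    ‖φ₁ y‖ ≤ η / δ + B * δ ^ 2 := by
  have hdiff := norm_sub_sub_two_smul_deriv_le hδ.le h₁ h₂ h₃ hB
  have hplus : ‖φ (y + δ)‖ ≤ η := hη _ ⟨by linarith, le_rfl⟩
  have hminus : ‖φ (y - δ)‖ ≤ η := hη _ ⟨le_rfl, by linarith⟩
  have hscaled : 2 * δ * ‖φ₁ y‖ ≤ 2 * η + 2 * B * δ ^ 3 := by
    calc 2 * δ * ‖φ₁ y‖ = ‖(2 * δ) • φ₁ y‖ := by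
          rw [norm_smul, Real.norm_of_nonneg (by positivity)]
      _ ≤ ‖φ (y + δ) - φ (y - δ)‖ + ‖φ (y + δ) - φ (y - δ) - (2 * δ) • φ₁ y‖ :=
          norm_le_insert _ _
      _ ≤ 2 * η + 2 * B * δ ^ 3 := by linarith [norm_sub_le (φ (y + δ)) (φ (y - δ))]
  rw [div_add' _ _ _ hδ.ne', le_div_iff₀ hδ]
  linarith

lemma exists_mem_uIcc_sub_eq_mul {φ φ' : ℝ → ℝ} {y z : ℝ}
    (hφ : ∀ s ∈ uIcc y z, HasDerivAt φ (φ' s) s) :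
    ∃ s ∈ uIcc y z, φ z - φ y = φ' s * (z - y) := by
  obtain ⟨s, hs, heq⟩ := domain_mvt (fun s hs => (hφ s hs).hasFDerivAt.hasFDerivWithinAt)
    (convex_uIcc y z) left_mem_uIcc right_mem_uIcc
  exact ⟨s, segment_eq_uIcc y z ▸ hs, by simpa [mul_comm] using heq⟩

end Calculus

section C13

/-- The function `F` of two real variables is of class `C^{1,3}`, with partial derivatives
`F₁ = ∂₁F`, `F₂ = ∂₂F`, `F₂₂ = ∂₂²F` and `F₂₂₂ = ∂₂³F`: these exist everywhere, and `F`, `F₁`,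
`F₂`, `F₂₂₂` are jointly continuous. -/
structure HasC13Partials (F F₁ F₂ F₂₂ F₂₂₂ : ℝ → ℝ → ℝ) : Prop where
  hasDerivAt_fst : ∀ x y, HasDerivAt (fun x => F x y) (F₁ x y) x
  hasDerivAt_snd : ∀ x y, HasDerivAt (F x) (F₂ x y) y
  hasDerivAt_snd_snd : ∀ x y, HasDerivAt (F₂ x) (F₂₂ x y) y
  hasDerivAt_snd_snd_snd : ∀ x y, HasDerivAt (F₂₂ x) (F₂₂₂ x y) y
  continuous : Continuous (uncurry F)
  continuous_fst : Continuous (uncurry F₁)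
  continuous_snd : Continuous (uncurry F₂)
  continuous_snd_snd_snd : Continuous (uncurry F₂₂₂)

lemma exists_forall_norm_le_of_continuous_uncurry {X Y E : Type*} [TopologicalSpace X]
    [TopologicalSpace Y] [SeminormedAddCommGroup E] {H : X → Y → E} (hH : Continuous (uncurry H))
    {S : Set X} {T : Set Y} (hS : IsCompact S) (hT : IsCompact T) :
    ∃ B, 0 ≤ B ∧ ∀ x ∈ S, ∀ y ∈ T, ‖H x y‖ ≤ B := by
  obtain ⟨B, hB⟩ := (hS.prod hT).exists_bound_of_continuousOn hH.continuousOn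
  exact ⟨max B 0, le_max_right B 0, fun x hx y hy => (hB (x, y) ⟨hx, hy⟩).trans (le_max_left B 0)⟩

variable {F F₁ F₂ F₂₂ F₂₂₂ : ℝ → ℝ → ℝ}

lemma HasC13Partials.abs_snd_sub_le (hF : HasC13Partials F F₁ F₂ F₂₂ F₂₂₂)
    {x x' y δ B₁ B₃ : ℝ} (hδ : 0 < δ) (hxδ : |x' - x| = δ ^ 3)
    (hB₁ : ∀ p ∈ uIcc x x', ∀ q ∈ Icc (y - δ) (y + δ), |F₁ p q| ≤ B₁)
    (hB₃ : ∀ p ∈ uIcc x x', ∀ q ∈ Icc (y - δ) (y + δ), |F₂₂₂ p q| ≤ B₃) :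
    |F₂ x' y - F₂ x y| ≤ (B₁ + 2 * B₃) * δ ^ 2 := by
  have hincr : ∀ q ∈ Icc (y - δ) (y + δ), |F x' q - F x q| ≤ B₁ * δ ^ 3 := fun q hq => by
    obtain ⟨p, hp, heq⟩ := exists_mem_uIcc_sub_eq_mul fun s (_ : s ∈ uIcc x x') =>
      hF.hasDerivAt_fst s q
    rw [heq, abs_mul, hxδ]
    exact mul_le_mul_of_nonneg_right (hB₁ p hp q hq) (by positivity)
  have hthird : ∀ q ∈ Icc (y - δ) (y + δ), |F₂₂₂ x' q - F₂₂₂ x q| ≤ 2 * B₃ := fun q hq => by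
    linarith [abs_sub (F₂₂₂ x' q) (F₂₂₂ x q), hB₃ x' right_mem_uIcc q hq, hB₃ x left_mem_uIcc q hq]
  calc |F₂ x' y - F₂ x y| ≤ B₁ * δ ^ 3 / δ + 2 * B₃ * δ ^ 2 :=
        norm_deriv_le_div_add_mul_sq (φ := fun q => F x' q - F x q)
          (φ₁ := fun q => F₂ x' q - F₂ x q) hδ
          (fun q _ => (hF.hasDerivAt_snd x' q).sub (hF.hasDerivAt_snd x q))
          (fun q _ => (hF.hasDerivAt_snd_snd x' q).sub (hF.hasDerivAt_snd_snd x q))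
          (fun q _ => (hF.hasDerivAt_snd_snd_snd x' q).sub (hF.hasDerivAt_snd_snd_snd x q))
          hincr hthird
    _ = (B₁ + 2 * B₃) * δ ^ 2 := by field_simp

lemma HasC13Partials.exists_abs_snd_sub_le_rpow (hF : HasC13Partials F F₁ F₂ F₂₂ F₂₂₂) (M : ℝ) :
    ∃ C, 0 ≤ C ∧ ∀ x ∈ Icc (-M) M, ∀ x' ∈ Icc (-M) M, ∀ y ∈ Icc (-M) M,
      |F₂ x' y - F₂ x y| ≤ C * |x' - x| ^ (2 / 3 : ℝ) := by
  set R : ℝ := M + (2 * M) ^ (1 / 3 : ℝ)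
  have hI : IsCompact (Icc (-M) M) := isCompact_Icc
  have hJ : IsCompact (Icc (-R) R) := isCompact_Icc
  obtain ⟨B₁, hB₁0, hB₁⟩ := exists_forall_norm_le_of_continuous_uncurry hF.continuous_fst hI hJ
  obtain ⟨B₃, hB₃0, hB₃⟩ :=
    exists_forall_norm_le_of_continuous_uncurry hF.continuous_snd_snd_snd hI hJ
  refine ⟨B₁ + 2 * B₃, by positivity, fun x hx x' hx' y hy => ?_⟩
  rcases eq_or_ne x' x with rfl | hne
  · simp
  -- The step that balances the two terms `|x' - x| / δ` and `δ ^ 2` of the interpolation bound.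
  set δ : ℝ := |x' - x| ^ (1 / 3 : ℝ)
  have hδ : 0 < δ := Real.rpow_pos_of_pos (abs_pos.2 (sub_ne_zero.2 hne)) _
  have hδR : δ ≤ R - M := by
    rw [add_sub_cancel_left]
    refine Real.rpow_le_rpow (abs_nonneg _) (abs_le.2 ?_) (by norm_num)
    constructor <;> linarith [hx.1, hx.2, hx'.1, hx'.2]
  have hδ_pow : ∀ n : ℕ, δ ^ n = |x' - x| ^ (1 / 3 * n : ℝ) := fun n => by
    rw [Real.rpow_mul (abs_nonneg _), Real.rpow_natCast]
  have hδ2 : |x' - x| ^ (2 / 3 : ℝ) = δ ^ 2 := by rw [hδ_pow]; norm_num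
  have hδ3 : |x' - x| = δ ^ 3 := by rw [hδ_pow]; norm_num
  have hp : uIcc x x' ⊆ Icc (-M) M := uIcc_subset_Icc hx hx'
  have hq : Icc (y - δ) (y + δ) ⊆ Icc (-R) R :=
    Icc_subset_Icc (by linarith [hy.1]) (by linarith [hy.2])
  rw [hδ2]
  exact hF.abs_snd_sub_le hδ hδ3 (fun p hp' q hq' => hB₁ p (hp hp') q (hq hq'))
    fun p hp' q hq' => hB₃ p (hp hp') q (hq hq')

lemma HasC13Partials.exists_abs_sub_sub_symm_le (hF : HasC13Partials F F₁ F₂ F₂₂ F₂₂₂) (M : ℝ) :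
    ∃ C, 0 ≤ C ∧ ∀ x ∈ Icc (-M) M, ∀ x' ∈ Icc (-M) M, ∀ y ∈ Icc (-M) M, ∀ y' ∈ Icc (-M) M,
      |F x y' - F x y - (F₂ x' y' + F₂ x y) / 2 * (y' - y)|
        ≤ C * (|y' - y| ^ 3 + |x' - x| ^ (2 / 3 : ℝ) * |y' - y|) := by
  have hI : IsCompact (Icc (-M) M) := isCompact_Icc
  obtain ⟨B, hB0, hB⟩ :=
    exists_forall_norm_le_of_continuous_uncurry hF.continuous_snd_snd_snd hI hI
  obtain ⟨C, hC0, hC⟩ := hF.exists_abs_snd_sub_le_rpow M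
  refine ⟨B + C, by positivity, fun x hx x' hx' y hy y' hy' => ?_⟩
  have htrap : |F x y' - F x y - (y' - y) / 2 * (F₂ x y' + F₂ x y)| ≤ B / 2 * |y' - y| ^ 3 :=
    norm_sub_sub_trapezoid_le (fun s _ => hF.hasDerivAt_snd x s)
      (fun s _ => hF.hasDerivAt_snd_snd x s) (fun s _ => hF.hasDerivAt_snd_snd_snd x s)
      fun s hs => hB x hx s (uIcc_subset_Icc hy hy' hs)
  have hfreeze : |(F₂ x' y' - F₂ x y') / 2 * (y' - y)|
      ≤ C / 2 * (|x' - x| ^ (2 / 3 : ℝ) * |y' - y|) := by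
    rw [abs_mul, abs_div, abs_two]
    linarith [mul_le_mul_of_nonneg_right (hC x hx x' hx' y' hy') (abs_nonneg (y' - y))]
  have hcube : 0 ≤ |y' - y| ^ 3 := by positivity
  have hmixed : 0 ≤ |x' - x| ^ (2 / 3 : ℝ) * |y' - y| := by positivity
  calc |F x y' - F x y - (F₂ x' y' + F₂ x y) / 2 * (y' - y)|
      = |F x y' - F x y - (y' - y) / 2 * (F₂ x y' + F₂ x y)
          - (F₂ x' y' - F₂ x y') / 2 * (y' - y)| := by ring_nf
    _ ≤ B / 2 * |y' - y| ^ 3 + C / 2 * (|x' - x| ^ (2 / 3 : ℝ) * |y' - y|) :=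
        (abs_sub _ _).trans (add_le_add htrap hfreeze)
    _ ≤ (B + C) * (|y' - y| ^ 3 + |x' - x| ^ (2 / 3 : ℝ) * |y' - y|) := by
        nlinarith [mul_nonneg hB0 hcube, mul_nonneg hC0 hcube, mul_nonneg hB0 hmixed,
          mul_nonneg hC0 hmixed]

end C13

section ForwardDifferences

lemma tendsto_integral_forward_difference {E : Type*} [NormedAddCommGroup E] [NormedSpace ℝ E]
    [CompleteSpace E] {h : ℝ → E} (hh : Continuous h) (s t : ℝ) :
    Tendsto (fun ε : ℝ => ∫ u in s..t, ε⁻¹ • (h (u + ε) - h u)) (𝓝[>] 0) (𝓝 (h t - h s)) := by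
  have hint : ∀ p q, IntervalIntegrable h volume p q := hh.intervalIntegrable
  have haverage : ∀ p, Tendsto (fun ε : ℝ => ε⁻¹ • ∫ u in p..(p + ε), h u) (𝓝[>] 0) (𝓝 (h p)) :=
    fun p => by
      simpa using (hh.integral_hasStrictDerivAt p p).hasDerivAt.tendsto_slope_zero_right
  refine ((haverage t).sub (haverage s)).congr fun ε => ?_
  have hshift : Continuous fun u => h (u + ε) := by fun_prop
  rw [← smul_sub, intervalIntegral.integral_smul,
    intervalIntegral.integral_sub (hshift.intervalIntegrable s t) (hint s t),
    intervalIntegral.integral_comp_add_right,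
    intervalIntegral.integral_interval_sub_interval_comm' (hint _ _) (hint _ _) (hint _ _)]

variable {F F₁ : ℝ → ℝ → ℝ} {A G : ℝ → ℝ}

lemma tendsto_forward_difference_fst (hF : ∀ x y, HasDerivAt (fun x => F x y) (F₁ x y) x)
    {u A' : ℝ} (hF₁ : ContinuousAt (uncurry F₁) (A u, G u)) (hA : HasDerivAt A A' u)
    (hG : ContinuousAt G u) :
    Tendsto (fun ε => ε⁻¹ * (F (A (u + ε)) (G (u + ε)) - F (A u) (G (u + ε)))) (𝓝[>] 0)
      (𝓝 (F₁ (A u) (G u) * A')) := by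
  have hshift : Tendsto (fun ε => u + ε) (𝓝[>] 0) (𝓝 u) := by
    simpa using (continuous_const_add u).continuousAt.tendsto.mono_left
      (nhdsWithin_le_nhds (a := (0 : ℝ)) (s := Ioi 0))
  have hAshift : Tendsto (fun ε => A (u + ε)) (𝓝[>] 0) (𝓝 (A u)) :=
    hA.continuousAt.tendsto.comp hshift
  choose ξ hξ hmv using fun ε => exists_mem_uIcc_sub_eq_mul
    fun s (_ : s ∈ uIcc (A u) (A (u + ε))) => hF s (G (u + ε))
  have hξlim : Tendsto ξ (𝓝[>] 0) (𝓝 (A u)) := by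
    refine tendsto_iff_dist_tendsto_zero.2 (squeeze_zero (fun _ => dist_nonneg) (fun ε => ?_)
      (tendsto_iff_dist_tendsto_zero.1 hAshift))
    simpa only [Real.dist_eq, abs_sub_comm] using abs_sub_left_of_mem_uIcc (hξ ε)
  have hF₁lim : Tendsto (fun ε => F₁ (ξ ε) (G (u + ε))) (𝓝[>] 0) (𝓝 (F₁ (A u) (G u))) :=
    hF₁.tendsto.comp (hξlim.prodMk_nhds (hG.tendsto.comp hshift))
  refine (hF₁lim.mul hA.tendsto_slope_zero_right).congr fun ε => ?_
  rw [hmv, smul_eq_mul]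
  ring

lemma tendsto_integral_forward_difference_fst
    (hF : ∀ x y, HasDerivAt (fun x => F x y) (F₁ x y) x) (hFc : Continuous (uncurry F))
    (hF₁ : Continuous (uncurry F₁)) {K : ℝ≥0} (hA : LipschitzWith K A) (hG : Continuous G) {M : ℝ}
    (hAM : ∀ u, A u ∈ Icc (-M) M) (hGM : ∀ u, G u ∈ Icc (-M) M) (s t : ℝ) :
    Tendsto (fun ε => ∫ u in s..t, ε⁻¹ * (F (A (u + ε)) (G (u + ε)) - F (A u) (G (u + ε))))
      (𝓝[>] 0) (𝓝 (∫ u in s..t, F₁ (A u) (G u) * deriv A u)) := by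
  have hAc : Continuous A := hA.continuous
  obtain ⟨B, hB0, hB⟩ := exists_forall_norm_le_of_continuous_uncurry hF₁
    (isCompact_Icc (a := -M) (b := M)) (isCompact_Icc (a := -M) (b := M))
  refine intervalIntegral.tendsto_integral_filter_of_dominated_convergence (fun _ => B * K) ?_ ?_
    intervalIntegrable_const ?_
  · refine Eventually.of_forall fun ε => Continuous.aestronglyMeasurable ?_
    fun_prop
  · filter_upwards [self_mem_nhdsWithin] with ε (hε : 0 < ε)
    refine Eventually.of_forall fun u _ => ?_
    obtain ⟨ξ, hξ, hmv⟩ := exists_mem_uIcc_sub_eq_mul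
      fun s (_ : s ∈ uIcc (A u) (A (u + ε))) => hF s (G (u + ε))
    have hF₁B : |F₁ ξ (G (u + ε))| ≤ B := hB ξ (uIcc_subset_Icc (hAM _) (hAM _) hξ) _ (hGM _)
    have hincr : |A (u + ε) - A u| ≤ K * ε := by
      simpa [Real.dist_eq, abs_of_pos hε] using hA.dist_le_mul (u + ε) u
    rw [Real.norm_eq_abs, abs_mul, abs_inv, abs_of_pos hε, inv_mul_le_iff₀ hε, hmv, abs_mul]
    calc |F₁ ξ (G (u + ε))| * |A (u + ε) - A u| ≤ B * (K * ε) := by gcongr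
      _ = ε * (B * K) := by ring
  · filter_upwards [hA.ae_differentiableAt_real] with u hu _
    exact tendsto_forward_difference_fst hF hF₁.continuousAt hu.hasDerivAt hG.continuousAt

end ForwardDifferences

section SymmetricIntegral

variable {F F₁ F₂ F₂₂ F₂₂₂ : ℝ → ℝ → ℝ} {A G : ℝ → ℝ} {K C r : ℝ≥0} {M : ℝ}

lemma HasC13Partials.tendsto_integral_symm_error (hF : HasC13Partials F F₁ F₂ F₂₂ F₂₂₂)
    (hA : LipschitzWith K A) (hG : HolderWith C r G) (hr : 1 / 3 < r)
    (hAM : ∀ u, A u ∈ Icc (-M) M) (hGM : ∀ u, G u ∈ Icc (-M) M) (s t : ℝ) :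
    Tendsto (fun ε => ∫ u in s..t, ε⁻¹ * (F (A u) (G (u + ε)) - F (A u) (G u)
      - (F₂ (A (u + ε)) (G (u + ε)) + F₂ (A u) (G u)) / 2 * (G (u + ε) - G u)))
      (𝓝[>] 0) (𝓝 0) := by
  have hr' : (1 / 3 : ℝ) < r := by exact_mod_cast hr
  have hcubic : (0 : ℝ) < 3 * r - 1 := by linarith [hr']
  have hcross : (0 : ℝ) < r - 1 / 3 := sub_pos.2 hr'
  obtain ⟨D, hD0, hD⟩ := hF.exists_abs_sub_sub_symm_le M
  let c : ℝ := K ^ (2 / 3 : ℝ) * C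
  have hpow : ∀ p : ℝ, 0 < p → Tendsto (fun ε : ℝ => ε ^ p) (𝓝[>] 0) (𝓝 0) := fun p hp => by
    simpa [Real.zero_rpow hp.ne'] using
      (Real.continuousAt_rpow_const 0 p (Or.inr hp.le)).tendsto.mono_left nhdsWithin_le_nhds
  have hlim : Tendsto (fun ε : ℝ => D * (C ^ 3 * ε ^ (3 * r - 1 : ℝ) + c * ε ^ (r - 1 / 3 : ℝ))
      * |t - s|) (𝓝[>] 0) (𝓝 0) := by
    simpa using ((((hpow _ hcubic).const_mul (C ^ 3 : ℝ)).add
      ((hpow _ hcross).const_mul c)).const_mul D).mul_const |t - s|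
  refine squeeze_zero_norm' ?_ hlim
  filter_upwards [self_mem_nhdsWithin] with ε (hε : 0 < ε)
  refine intervalIntegral.norm_integral_le_of_norm_le_const fun u _ => ?_
  have hΔA : |A (u + ε) - A u| ≤ K * ε := by
    simpa [Real.dist_eq, abs_of_pos hε] using hA.dist_le_mul (u + ε) u
  have hΔG : |G (u + ε) - G u| ≤ C * ε ^ (r : ℝ) := by
    simpa [Real.dist_eq, abs_of_pos hε] using hG.dist_le (u + ε) u
  have hcube : (ε ^ (r : ℝ)) ^ 3 = ε * ε ^ (3 * r - 1 : ℝ) := by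
    rw [← Real.rpow_natCast, ← Real.rpow_mul hε.le,
      ← Real.rpow_one_add' hε.le (by linarith [hcubic])]
    congr 1; push_cast; ring
  have hmixed : ε ^ (2 / 3 : ℝ) * ε ^ (r : ℝ) = ε * ε ^ (r - 1 / 3 : ℝ) := by
    rw [← Real.rpow_add hε, ← Real.rpow_one_add' hε.le (by linarith [hcross])]
    congr 1; ring
  rw [Real.norm_eq_abs, abs_mul, abs_inv, abs_of_pos hε, inv_mul_le_iff₀ hε]
  calc _ ≤ D * (|G (u + ε) - G u| ^ 3
          + |A (u + ε) - A u| ^ (2 / 3 : ℝ) * |G (u + ε) - G u|) :=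
        hD _ (hAM u) _ (hAM (u + ε)) _ (hGM u) _ (hGM (u + ε))
    _ ≤ D * ((C * ε ^ (r : ℝ)) ^ 3 + (K * ε) ^ (2 / 3 : ℝ) * (C * ε ^ (r : ℝ))) := by gcongr
    _ = D * (C ^ 3 * (ε ^ (r : ℝ)) ^ 3 + c * (ε ^ (2 / 3 : ℝ) * ε ^ (r : ℝ))) := by
        rw [Real.mul_rpow K.coe_nonneg hε.le]; ring
    _ = ε * (D * (C ^ 3 * ε ^ (3 * r - 1 : ℝ) + c * ε ^ (r - 1 / 3 : ℝ))) := by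
        rw [hcube, hmixed]; ring

lemma HasC13Partials.tendsto_integral_symm (hF : HasC13Partials F F₁ F₂ F₂₂ F₂₂₂)
    (hA : LipschitzWith K A) (hG : HolderWith C r G) (hr : 1 / 3 < r)
    (hAM : ∀ u, A u ∈ Icc (-M) M) (hGM : ∀ u, G u ∈ Icc (-M) M) (s t : ℝ) :
    Tendsto (fun ε => ∫ u in s..t,
        (F₂ (A (u + ε)) (G (u + ε)) + F₂ (A u) (G u)) / 2 * ((G (u + ε) - G u) / ε))
      (𝓝[>] 0)
      (𝓝 (F (A t) (G t) - F (A s) (G s) - ∫ u in s..t, F₁ (A u) (G u) * deriv A u)) := by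
  have hAc : Continuous A := hA.continuous
  have hGc : Continuous G := hG.continuous (lt_trans (by norm_num) hr)
  have hFc := hF.continuous
  have hF₂c := hF.continuous_snd
  have htotal := tendsto_integral_forward_difference (h := fun u => F (A u) (G u)) (by fun_prop) s t
  have hfst := tendsto_integral_forward_difference_fst hF.hasDerivAt_fst hFc hF.continuous_fst
    hA hGc hAM hGM s t
  have herror := hF.tendsto_integral_symm_error hA hG hr hAM hGM s t
  rw [← sub_zero (_ - ∫ u in s..t, _)]
  refine ((htotal.sub hfst).sub herror).congr fun ε => ?_
  simp only [smul_eq_mul]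
  rw [← intervalIntegral.integral_sub, ← intervalIntegral.integral_sub]
  · refine intervalIntegral.integral_congr fun u _ => ?_
    ring
  all_goals exact Continuous.intervalIntegrable (by fun_prop) _ _

end SymmetricIntegral

section Stopping

variable {s t : ℝ} (h : s ≤ t)

lemma deriv_IccExtend_domRestrict {E : Type*} [NormedAddCommGroup E] [NormedSpace ℝ E] {a : ℝ → E}
    {u : ℝ} (hu : u ∈ Ioo s t) : deriv (IccExtend h ((Icc s t).domRestrict a)) u = deriv a u := by
  refine EventuallyEq.deriv_eq ?_
  filter_upwards [Ioo_mem_nhds hu.1 hu.2] with v hv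
  exact IccExtend_of_mem h _ (Ioo_subset_Icc_self hv)

lemma exists_forall_IccExtend_domRestrict_mem_Icc {a : ℝ → ℝ} (ha : ContinuousOn a (Icc s t)) :
    ∃ M, ∀ M' ≥ M, ∀ u, IccExtend h ((Icc s t).domRestrict a) u ∈ Icc (-M') M' := by
  obtain ⟨M, hM⟩ := isCompact_Icc.exists_bound_of_continuousOn ha
  exact ⟨M, fun M' hM' u => abs_le.1 ((hM _ (projIcc s t h u).2).trans hM')⟩

end Stopping

lemma hasSymmInt_iff_tendsto_IccExtend {f g : ℝ → ℝ} {t I : ℝ} (ht : 0 ≤ t) :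
    HasSymmInt f g t I ↔
      let f' := IccExtend ht ((Icc 0 t).domRestrict f)
      let g' := IccExtend ht ((Icc 0 t).domRestrict g)
      Tendsto (fun ε => ∫ u in (0 : ℝ)..t, (f' (u + ε) + f' u) / 2 * ((g' (u + ε) - g' u) / ε))
        (𝓝[>] 0) (𝓝 I) := by
  refine tendsto_congr' ?_
  filter_upwards [self_mem_nhdsWithin] with ε (hε : 0 < ε)
  refine intervalIntegral.integral_congr fun u hu => ?_
  rw [uIcc_of_le ht] at hu
  have hmin : max 0 (min t (u + ε)) = min (u + ε) t := by
    rw [min_comm, max_eq_right (le_min (by linarith [hu.1]) ht)]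
  have hself : max 0 (min t u) = u := by rw [min_eq_right hu.2, max_eq_right hu.1]
  simp only [IccExtend_apply, domRestrict_apply, hmin, hself]

theorem stmt0_general {f f₁ f₂ f₂₂ f₂₂₂ : ℝ → ℝ → ℝ} (hf : HasC13Partials f f₁ f₂ f₂₂ f₂₂₂)
    {t : ℝ} (ht : 0 ≤ t) {a g : ℝ → ℝ} {K C r : ℝ≥0} (ha : LipschitzOnWith K a (Icc 0 t))
    (hg : HolderOnWith C r g (Icc 0 t)) (hr : 1 / 3 < r) :
    HasSymmInt (fun u => f₂ (a u) (g u)) g t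
      (f (a t) (g t) - f (a 0) (g 0) - ∫ u in (0 : ℝ)..t, f₁ (a u) (g u) * deriv a u) := by
  set A := IccExtend ht ((Icc 0 t).domRestrict a)
  set G := IccExtend ht ((Icc 0 t).domRestrict g)
  have hP : LipschitzWith 1 (projIcc 0 t ht) := LipschitzWith.projIcc ht
  have hA : LipschitzWith (K * 1) A := ha.to_restrict.comp hP
  have hG : HolderWith (C * 1 ^ (r : ℝ)) (r * 1) G := hg.holderWith.comp hP.holderWith
  obtain ⟨M₁, hM₁⟩ := exists_forall_IccExtend_domRestrict_mem_Icc ht ha.continuousOn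
  obtain ⟨M₂, hM₂⟩ := exists_forall_IccExtend_domRestrict_mem_Icc ht
    (hg.continuousOn (lt_trans (by norm_num) hr))
  have hmain := hf.tendsto_integral_symm hA hG (by simpa using hr)
    (hM₁ (max M₁ M₂) (le_max_left _ _)) (hM₂ (max M₁ M₂) (le_max_right _ _)) 0 t
  have hAeq : ∀ u ∈ Icc 0 t, A u = a u := fun u hu => IccExtend_of_mem ht _ hu
  have hGeq : ∀ u ∈ Icc 0 t, G u = g u := fun u hu => IccExtend_of_mem ht _ hu
  have hdrift : ∫ u in (0 : ℝ)..t, f₁ (A u) (G u) * deriv A u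
      = ∫ u in (0 : ℝ)..t, f₁ (a u) (g u) * deriv a u :=
    intervalIntegral.integral_congr_Ioo_of_le ht fun u hu => by
      have hu' := Ioo_subset_Icc_self hu
      simp only [hAeq u hu', hGeq u hu', A, deriv_IccExtend_domRestrict ht hu]
  rw [hdrift, hAeq t (right_mem_Icc.2 ht), hGeq t (right_mem_Icc.2 ht),
    hAeq 0 (left_mem_Icc.2 ht), hGeq 0 (left_mem_Icc.2 ht)] at hmain
  exact (hasSymmInt_iff_tendsto_IccExtend ht).2 hmain

lemma HasC13Partials.of_contDiff {f : ℝ → ℝ → ℝ} (hf₁ : ∀ y, Differentiable ℝ fun x => f x y)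
    (hf₂ : ∀ x, ContDiff ℝ 3 (f x)) (hc : Continuous fun p : ℝ × ℝ => f p.1 p.2)
    (hc₁ : Continuous fun p : ℝ × ℝ => deriv (fun x => f x p.2) p.1)
    (hc₂ : Continuous fun p : ℝ × ℝ => deriv (f p.1) p.2)
    (hc₂₂₂ : Continuous fun p : ℝ × ℝ => deriv (deriv (deriv (f p.1))) p.2) :
    HasC13Partials f (fun x y => deriv (fun x => f x y) x) (fun x => deriv (f x))
      (fun x => deriv (deriv (f x))) (fun x => deriv (deriv (deriv (f x)))) where
  hasDerivAt_fst x y := (hf₁ y x).hasDerivAt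
  hasDerivAt_snd x y := ((hf₂ x).differentiable (by norm_num) y).hasDerivAt
  hasDerivAt_snd_snd x y := by
    have h : ContDiff ℝ 2 (deriv (f x)) := (hf₂ x).deriv'
    exact (h.differentiable (by norm_num) y).hasDerivAt
  hasDerivAt_snd_snd_snd x y := by
    have h : ContDiff ℝ 1 (deriv (deriv (f x))) := (hf₂ x).deriv'.deriv'
    exact (h.differentiable (by norm_num) y).hasDerivAt
  continuous := hc
  continuous_fst := hc₁
  continuous_snd := hc₂
  continuous_snd_snd_snd := hc₂₂₂

lemma holderOnWith_of_dist_le_mul {X Y : Type*} [PseudoMetricSpace X] [PseudoMetricSpace Y]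
    {C r : ℝ≥0} {g : X → Y} {s : Set X}
    (h : ∀ x ∈ s, ∀ y ∈ s, dist (g x) (g y) ≤ C * dist x y ^ (r : ℝ)) : HolderOnWith C r g s := by
  intro x hx y hy
  rw [edist_nndist, edist_nndist, ← ENNReal.coe_rpow_of_nonneg _ r.coe_nonneg]
  exact_mod_cast h x hx y hy

theorem stmt0
    (lam : ℝ) (hlam1 : 1/3 < lam) (hlam2 : lam < 1)
    (a : ℝ → ℝ) (K : NNReal) (ha : LipschitzOnWith K a (Set.Icc 0 1))
    (g : ℝ → ℝ) (Cg : ℝ)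
    (hg : ∀ s ∈ Set.Icc (0:ℝ) 1, ∀ t ∈ Set.Icc (0:ℝ) 1, |g t - g s| ≤ Cg * |t - s| ^ lam)
    (hg0 : g 0 = 0)
    (f : ℝ → ℝ → ℝ)
    (hfd1 : ∀ y : ℝ, Differentiable ℝ (fun x => f x y))
    (hfd2 : ∀ x : ℝ, ContDiff ℝ 3 (f x))
    (hfc : Continuous fun p : ℝ × ℝ => f p.1 p.2)
    (hfc1 : Continuous fun p : ℝ × ℝ => deriv (fun x => f x p.2) p.1)
    (hfc2 : Continuous fun p : ℝ × ℝ => deriv (f p.1) p.2)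
    (hfc22 : Continuous fun p : ℝ × ℝ => deriv (deriv (f p.1)) p.2)
    (hfc222 : Continuous fun p : ℝ × ℝ => deriv (deriv (deriv (f p.1))) p.2) :
    ∀ t ∈ Set.Icc (0:ℝ) 1, ∃ I : ℝ,
      HasSymmInt (fun u => deriv (f (a u)) (g u)) g t I ∧
      f (a t) (g t) = f (a 0) (g 0)
        + (∫ u in (0:ℝ)..t, deriv (fun x => f x (g u)) (a u) * deriv a u) + I := by
  intro t ht
  have hf := HasC13Partials.of_contDiff hfd1 hfd2 hfc hfc1 hfc2 hfc222
  have hCg : 0 ≤ Cg := by simpa using (abs_nonneg _).trans (hg 0 (by simp) 1 (by simp))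
  lift Cg to NNReal using hCg
  lift lam to NNReal using by linarith
  have hgH : HolderOnWith Cg lam g (Icc 0 1) := holderOnWith_of_dist_le_mul fun x hx y hy => by
    simpa only [Real.dist_eq, abs_sub_comm] using hg y hy x hx
  have hsub : Icc 0 t ⊆ Icc 0 1 := Icc_subset_Icc_right ht.2
  exact ⟨_, stmt0_general hf ht.1 (ha.mono hsub) (hgH.mono hsub) (by exact_mod_cast hlam1), by ring⟩
end

section
/- Let 1/3 < λ < 1, let a : [0,1] → ℝ be Lipschitz continuous, let g ∈ C^λ₀([0,1];ℝ), and let f : ℝ² → ℝ be such that f, ∂₁f, ∂₂f and ∂₂²f exist and are continuous on ℝ². Define F(x,y) = ∫₀^y f(x,η) dη, so that ∂₁F(x,y) = ∫₀^y ∂₁f(x,η) dη. Then for every t ∈ [0,1] the Russo–Vallois symmetric integral ∫₀^t f(a_u,g_u) d°g_u exists and equals F(a_t,g_t) − F(a_0,g_0) − ∫₀^t ∂₁F(a_u,g_u) a'(u) du, where a' denotes the almost-everywhere defined derivative of the Lipschitz function a. -/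
/-!
Let `F(x, y) = ∫₀^y f(x, η) dη` and write `v = u + ε`, the paths being frozen at time `t`. The
trapezoidal rule gives

`(f(a_v, g_v) + f(a_u, g_u)) / 2 · (g_v - g_u)
  = (F(a_v, g_v) - F(a_u, g_u)) - (F(a_v, g_v) - F(a_u, g_v)) + O(ε |g_v - g_u| + |g_v - g_u|³)`.

Divided by `ε` and integrated over `[0, t]`, the first bracket telescopes to
`F(a_t, g_t) - F(a_0, g_0)`, the second converges to `∫ ∂₁F(a_u, g_u) a'(u) du` by dominated
convergence, since `a` is Lipschitz, and the error vanishes because `g` is continuous with zero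
cubic variation, as is every Hölder path of exponent above `1/3`.
-/

open Filter Topology MeasureTheory Set
open scoped NNReal Interval

section Increments

theorem tendsto_integral_norm_increment {E : Type*} [NormedAddCommGroup E] {h : ℝ → E}
    (hh : Continuous h) (s t : ℝ) :
    Tendsto (fun ε : ℝ => ∫ u in s..t, ‖h (u + ε) - h u‖) (𝓝 0) (𝓝 0) := by
  have hc : Continuous fun ε : ℝ => ∫ u in s..t, ‖h (u + ε) - h u‖ :=
    intervalIntegral.continuous_parametric_intervalIntegral_of_continuous' (by fun_prop) _ _
  simpa using hc.tendsto 0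

variable {E Y : Type*} [NormedAddCommGroup E] [NormedSpace ℝ E] [TopologicalSpace Y]

theorem tendsto_integral_inv_smul_increment [CompleteSpace E] {h : ℝ → E} (hh : Continuous h)
    (s t : ℝ) :
    Tendsto (fun ε : ℝ => ∫ u in s..t, ε⁻¹ • (h (u + ε) - h u)) (𝓝[≠] 0) (𝓝 (h t - h s)) := by
  have hi : ∀ x y, IntervalIntegrable h volume x y := hh.intervalIntegrable
  have hprim : ∀ x, Tendsto (fun ε => ε⁻¹ • ((∫ u in s..x + ε, h u) - ∫ u in s..x, h u))
      (𝓝[≠] 0) (𝓝 (h x)) := fun x =>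
    hasDerivAt_iff_tendsto_slope_zero.1 (hh.integral_hasStrictDerivAt s x).hasDerivAt
  refine ((hprim t).sub (hprim s)).congr fun ε => ?_
  have hshift : IntervalIntegrable (fun u => h (u + ε)) volume s t :=
    Continuous.intervalIntegrable (by fun_prop) _ _
  rw [intervalIntegral.integral_smul, intervalIntegral.integral_sub hshift (hi _ _),
    intervalIntegral.integral_comp_add_right,
    ← intervalIntegral.integral_interval_sub_left (hi s (t + ε)) (hi s (s + ε)),
    intervalIntegral.integral_same, ← smul_sub]
  congr 1
  abel

theorem exists_continuous_difference_quotient [CompleteSpace E] {F F' : ℝ → Y → E}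
    (hF : ∀ x y, HasDerivAt (F · y) (F' x y) x) (hF' : Continuous F'.uncurry) :
    ∃ Φ : ℝ × ℝ × Y → E, Continuous Φ ∧ (∀ x y, Φ (x, x, y) = F' x y) ∧
      ∀ x x' y, F x' y - F x y = (x' - x) • Φ (x, x', y) := by
  refine ⟨fun p => ∫ s in (0 : ℝ)..1, F' (p.1 + s * (p.2.1 - p.1)) p.2.2, by fun_prop,
    fun x y => by simp, fun x x' y => ?_⟩
  have hline : ∀ s : ℝ, HasDerivAt (fun s : ℝ => F (x + s * (x' - x)) y)
      ((x' - x) • F' (x + s * (x' - x)) y) s := fun s => by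
    refine (hF _ y).scomp s ?_
    simpa using ((hasDerivAt_id s).mul_const (x' - x)).const_add x
  have hcont : Continuous fun s : ℝ => (x' - x) • F' (x + s * (x' - x)) y := by fun_prop
  have hftc := intervalIntegral.integral_eq_sub_of_hasDerivAt (fun s _ => hline s)
    (hcont.intervalIntegrable 0 1)
  simpa using hftc.symm

theorem tendsto_integral_inv_smul_partial_increment [CompleteSpace E]
    {F F' : ℝ → Y → E} (hF : ∀ x y, HasDerivAt (F · y) (F' x y) x)
    (hF' : Continuous F'.uncurry) {A : ℝ → ℝ} {K : ℝ≥0} (hA : LipschitzWith K A)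
    {G : ℝ → Y} (hG : Continuous G) (s t : ℝ) :
    Tendsto (fun ε : ℝ => ∫ u in s..t, ε⁻¹ • (F (A (u + ε)) (G (u + ε)) - F (A u) (G (u + ε))))
      (𝓝[≠] 0) (𝓝 (∫ u in s..t, deriv A u • F' (A u) (G u))) := by
  obtain ⟨Φ, hΦ, hdiag, hquot⟩ := exists_continuous_difference_quotient hF hF'
  have hAc := hA.continuous
  have hΦc : Continuous fun p : ℝ × ℝ => Φ (A p.1, A (p.1 + p.2), G (p.1 + p.2)) := by fun_prop
  obtain ⟨B, hB⟩ := ((isCompact_uIcc (a := s) (b := t)).prod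
    (isCompact_Icc (a := (-1 : ℝ)) (b := 1))).exists_bound_of_continuousOn hΦc.continuousOn
  simp only [hquot, smul_smul]
  refine intervalIntegral.tendsto_integral_filter_of_dominated_convergence (fun _ => K * B)
    (Eventually.of_forall fun ε => Continuous.aestronglyMeasurable (by fun_prop)) ?_
    intervalIntegrable_const ?_
  · have hsmall : ∀ᶠ ε : ℝ in 𝓝[≠] 0, ε ∈ Icc (-1 : ℝ) 1 :=
      mem_nhdsWithin_of_mem_nhds (Icc_mem_nhds (by norm_num) one_pos)
    filter_upwards [hsmall, self_mem_nhdsWithin] with ε hε hε0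
    refine Eventually.of_forall fun u hu => ?_
    have hslope : ‖ε⁻¹ * (A (u + ε) - A u)‖ ≤ K := by
      rw [norm_mul, norm_inv, inv_mul_le_iff₀ (norm_pos_iff.2 hε0), mul_comm]
      simpa [Real.dist_eq] using hA.dist_le_mul (u + ε) u
    rw [norm_smul]
    exact mul_le_mul hslope (hB (u, ε) ⟨uIoc_subset_uIcc hu, hε⟩) (norm_nonneg _) K.2
  · filter_upwards [hA.ae_differentiableAt_real] with u hu _
    have hlim : Tendsto (fun ε => Φ (A u, A (u + ε), G (u + ε))) (𝓝[≠] 0)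
        (𝓝 (F' (A u) (G u))) := by
      have hc : Continuous fun ε : ℝ => Φ (A u, A (u + ε), G (u + ε)) := by fun_prop
      simpa [hdiag] using (hc.tendsto 0).mono_left nhdsWithin_le_nhds
    exact (hasDerivAt_iff_tendsto_slope_zero.1 hu.hasDerivAt).smul hlim

end Increments

section SndPrimitive

variable {E : Type*} [NormedAddCommGroup E] [NormedSpace ℝ E]

/-- The primitive `F(x, y) = ∫₀^y f(x, η) dη` of `f` in its second variable, whose increments along
the paths drive the chain rule. -/
noncomputable def sndPrimitive {X : Type*} (f : X → ℝ → E) (x : X) (y : ℝ) : E :=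
  ∫ η in (0 : ℝ)..y, f x η

theorem continuous_uncurry_sndPrimitive {X : Type*} [TopologicalSpace X] {f : X → ℝ → E}
    (hf : Continuous f.uncurry) : Continuous (sndPrimitive f).uncurry := by
  unfold sndPrimitive Function.uncurry
  fun_prop

theorem sndPrimitive_sub_sndPrimitive {X : Type*} {f : X → ℝ → E} {x : X} (hf : Continuous (f x))
    (y y' : ℝ) : sndPrimitive f x y' - sndPrimitive f x y = ∫ η in y..y', f x η :=
  intervalIntegral.integral_interval_sub_left (hf.intervalIntegrable _ _)
    (hf.intervalIntegrable _ _)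

theorem hasDerivAt_sndPrimitive {f f' : ℝ → ℝ → E}
    (hf : ∀ x y, HasDerivAt (f · y) (f' x y) x) (hfc : Continuous f.uncurry)
    (hfc' : Continuous f'.uncurry) (x y : ℝ) :
    HasDerivAt (sndPrimitive f · y) (sndPrimitive f' x y) x := by
  obtain ⟨B, hB⟩ := ((isCompact_closedBall x 1).prod (isCompact_uIcc (a := 0) (b := y))
    ).exists_bound_of_continuousOn hfc'.continuousOn
  exact (intervalIntegral.hasDerivAt_integral_of_dominated_loc_of_deriv_le (F' := f')
    (bound := fun _ => B) (Metric.closedBall_mem_nhds x one_pos)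
    (Eventually.of_forall fun x => (hfc.uncurry_left x).aestronglyMeasurable)
    ((hfc.uncurry_left x).intervalIntegrable _ _) (hfc'.uncurry_left x).aestronglyMeasurable
    (Eventually.of_forall fun η hη x' hx' => hB (x', η) ⟨hx', uIoc_subset_uIcc hη⟩)
    intervalIntegrable_const (Eventually.of_forall fun η _ x' _ => hf x' η)).2

end SndPrimitive

section Trapezoid

theorem abs_trapezoid_sub_integral_le {h : ℝ → ℝ} (hh : ContDiff ℝ 2 h) {y z M : ℝ}
    (hM : ∀ η ∈ [[y, z]], |deriv (deriv h) η| ≤ M) :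
    |(h z + h y) / 2 * (z - y) - ∫ η in y..z, h η| ≤ M / 12 * |z - y| ^ 3 := by
  rcases eq_or_ne y z with rfl | hyz
  · simp
  have hbound : ∀ x, |iteratedDerivWithin 2 h [[y, z]] x| ≤ M := fun x => by
    by_cases hx : x ∈ [[y, z]]
    · rw [iteratedDerivWithin_eq_iteratedDeriv (uniqueDiffOn_uIcc hyz) hh.contDiffAt hx,
        iteratedDeriv_succ, iteratedDeriv_one]
      exact hM x hx
    · rw [iteratedDerivWithin_succ, derivWithin_zero_of_notMem_closure
        (by rwa [isCompact_uIcc.isClosed.closure_eq]), abs_zero]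
      exact (abs_nonneg _).trans (hM y left_mem_uIcc)
  have herror := trapezoidal_error_le_of_c2 hh.contDiffOn hbound one_pos
  rw [trapezoidal_error, trapezoidal_integral_one] at herror
  calc |(h z + h y) / 2 * (z - y) - ∫ η in y..z, h η|
      = |(z - y) / 2 * (h y + h z) - ∫ η in y..z, h η| := by ring_nf
    _ ≤ |z - y| ^ 3 * M / (12 * (1 : ℕ) ^ 2) := herror
    _ = M / 12 * |z - y| ^ 3 := by
      push_cast
      ring

theorem exists_abs_trapezoid_sub_integral_le {f f' : ℝ → ℝ → ℝ}
    (hf : ∀ x y, HasDerivAt (f · y) (f' x y) x) (hf' : Continuous f'.uncurry)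
    (hf2 : ∀ x, ContDiff ℝ 2 (f x)) (hf2c : Continuous fun p : ℝ × ℝ => deriv (deriv (f p.1)) p.2)
    {s : Set ℝ} (hs : IsCompact s) (hsc : s.OrdConnected) :
    ∃ C ≥ 0, ∀ x ∈ s, ∀ x' ∈ s, ∀ y ∈ s, ∀ y' ∈ s,
      |(f x' y' + f x y) / 2 * (y' - y) - ∫ η in y..y', f x η|
        ≤ C * (|x' - x| * |y' - y| + |y' - y| ^ 3) := by
  obtain ⟨Φ, hΦ, -, hquot⟩ := exists_continuous_difference_quotient hf hf'
  obtain ⟨B, hB⟩ := (hs.prod (hs.prod hs)).exists_bound_of_continuousOn hΦ.continuousOn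
  obtain ⟨M, hM⟩ := (hs.prod hs).exists_bound_of_continuousOn hf2c.continuousOn
  have hcorner : ∀ x ∈ s, ∀ x' ∈ s, ∀ y' ∈ s, ∀ δ, |(f x' y' - f x y') / 2 * δ|
      ≤ B * (|x' - x| * |δ|) := fun x hx x' hx' y' hy' δ => by
    have hle : |Φ (x, x', y')| ≤ B := hB (x, x', y') ⟨hx, hx', hy'⟩
    rw [hquot, smul_eq_mul, abs_mul, abs_div, abs_mul, abs_two]
    have : |x' - x| * |δ| * |Φ (x, x', y')| ≤ |x' - x| * |δ| * B := by gcongr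
    have : 0 ≤ |x' - x| * |δ| * |Φ (x, x', y')| := by positivity
    linarith
  refine ⟨max 0 (max B (M / 12)), le_max_left _ _, fun x hx x' hx' y hy y' hy' => ?_⟩
  have htrap := abs_trapezoid_sub_integral_le (hf2 x) (y := y) (z := y') (M := M)
    fun η hη => hM (x, η) ⟨hx, hsc.uIcc_subset hy hy' hη⟩
  calc |(f x' y' + f x y) / 2 * (y' - y) - ∫ η in y..y', f x η|
      = |(f x' y' - f x y') / 2 * (y' - y)
          + ((f x y' + f x y) / 2 * (y' - y) - ∫ η in y..y', f x η)| := by ring_nf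
    _ ≤ B * (|x' - x| * |y' - y|) + M / 12 * |y' - y| ^ 3 :=
      (abs_add_le _ _).trans (add_le_add (hcorner x hx x' hx' y' hy' _) htrap)
    _ ≤ max 0 (max B (M / 12)) * (|x' - x| * |y' - y| + |y' - y| ^ 3) := by
      rw [mul_add]
      gcongr
      · exact (le_max_left _ _).trans (le_max_right _ _)
      · exact (le_max_right _ _).trans (le_max_right _ _)

end Trapezoid

section Line

variable {f f' : ℝ → ℝ → ℝ} {A G : ℝ → ℝ} {K : ℝ≥0} {t : ℝ}

theorem tendsto_integral_inv_mul_trapezoid_sub_integral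
    (hf : ∀ x y, HasDerivAt (f · y) (f' x y) x) (hf' : Continuous f'.uncurry)
    (hf2 : ∀ x, ContDiff ℝ 2 (f x)) (hf2c : Continuous fun p : ℝ × ℝ => deriv (deriv (f p.1)) p.2)
    (hA : LipschitzWith K A) (hG : Continuous G) (ht : 0 ≤ t)
    (hG3 : Tendsto (fun ε : ℝ => ∫ u in (0 : ℝ)..t, |G (u + ε) - G u| ^ 3 / ε) (𝓝[>] 0) (𝓝 0)) :
    Tendsto (fun ε : ℝ => ∫ u in (0 : ℝ)..t,
        ε⁻¹ * ((f (A (u + ε)) (G (u + ε)) + f (A u) (G u)) / 2 * (G (u + ε) - G u)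
          - ∫ η in G u..G (u + ε), f (A u) η))
      (𝓝[>] 0) (𝓝 0) := by
  obtain ⟨R, hR⟩ := (isCompact_Icc (a := (0 : ℝ)) (b := t + 1)).exists_bound_of_continuousOn
    (hA.continuous.prodMk hG).continuousOn
  have hmemA : ∀ u ∈ Icc 0 (t + 1), A u ∈ Icc (-R) R := fun u hu =>
    abs_le.1 ((norm_fst_le _).trans (hR u hu))
  have hmemG : ∀ u ∈ Icc 0 (t + 1), G u ∈ Icc (-R) R := fun u hu =>
    abs_le.1 ((norm_snd_le _).trans (hR u hu))
  obtain ⟨C, hC, hbound⟩ := exists_abs_trapezoid_sub_integral_le hf hf' hf2 hf2c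
    (isCompact_Icc (a := -R) (b := R)) ordConnected_Icc
  have hlim : Tendsto (fun ε : ℝ => C * (K * ∫ u in (0 : ℝ)..t, |G (u + ε) - G u|)
      + C * ∫ u in (0 : ℝ)..t, |G (u + ε) - G u| ^ 3 / ε) (𝓝[>] 0) (𝓝 0) := by
    simpa using (((tendsto_integral_norm_increment hG 0 t).mono_left
      nhdsWithin_le_nhds).const_mul (K : ℝ)).const_mul C |>.add (hG3.const_mul C)
  refine squeeze_zero_norm' ?_ hlim
  filter_upwards [Ioc_mem_nhdsGT one_pos] with ε hε
  have hpointwise : ∀ u ∈ Ioc 0 t,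
      ‖ε⁻¹ * ((f (A (u + ε)) (G (u + ε)) + f (A u) (G u)) / 2 * (G (u + ε) - G u)
          - ∫ η in G u..G (u + ε), f (A u) η)‖
        ≤ C * (K * |G (u + ε) - G u|) + C * (|G (u + ε) - G u| ^ 3 / ε) := fun u hu => by
    have hu₀ : u ∈ Icc 0 (t + 1) := ⟨hu.1.le, by linarith [hu.2]⟩
    have hu₁ : u + ε ∈ Icc 0 (t + 1) := ⟨by linarith [hu.1, hε.1], by linarith [hu.2, hε.2]⟩
    have hΔA : |A (u + ε) - A u| ≤ K * ε := by
      simpa [Real.dist_eq, abs_of_pos hε.1] using hA.dist_le_mul (u + ε) u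
    rw [norm_mul, norm_inv, Real.norm_of_nonneg hε.1.le, inv_mul_le_iff₀ hε.1]
    calc _ ≤ C * (|A (u + ε) - A u| * |G (u + ε) - G u| + |G (u + ε) - G u| ^ 3) :=
          hbound _ (hmemA u hu₀) _ (hmemA _ hu₁) _ (hmemG u hu₀) _ (hmemG _ hu₁)
      _ ≤ C * (K * ε * |G (u + ε) - G u| + |G (u + ε) - G u| ^ 3) := by gcongr
      _ = _ := by field_simp [hε.1.ne']
  refine (intervalIntegral.norm_integral_le_of_norm_le ht (.of_forall hpointwise)
    (Continuous.intervalIntegrable (by fun_prop) _ _)).trans_eq ?_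
  rw [intervalIntegral.integral_add (Continuous.intervalIntegrable (by fun_prop) _ _)
    (Continuous.intervalIntegrable (by fun_prop) _ _)]
  simp only [intervalIntegral.integral_const_mul]

theorem tendsto_symmetric_integral
    (hf : ∀ x y, HasDerivAt (f · y) (f' x y) x) (hfc : Continuous f.uncurry)
    (hf' : Continuous f'.uncurry)
    (hf2 : ∀ x, ContDiff ℝ 2 (f x)) (hf2c : Continuous fun p : ℝ × ℝ => deriv (deriv (f p.1)) p.2)
    (hA : LipschitzWith K A) (hG : Continuous G) (ht : 0 ≤ t)
    (hG3 : Tendsto (fun ε : ℝ => ∫ u in (0 : ℝ)..t, |G (u + ε) - G u| ^ 3 / ε) (𝓝[>] 0) (𝓝 0)) :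
    Tendsto (fun ε : ℝ => ∫ u in (0 : ℝ)..t,
        (f (A (u + ε)) (G (u + ε)) + f (A u) (G u)) / 2 * ((G (u + ε) - G u) / ε))
      (𝓝[>] 0)
      (𝓝 (sndPrimitive f (A t) (G t) - sndPrimitive f (A 0) (G 0)
        - ∫ u in (0 : ℝ)..t, sndPrimitive f' (A u) (G u) * deriv A u)) := by
  have hAc := hA.continuous
  have hFc := continuous_uncurry_sndPrimitive hfc
  have hF'c := continuous_uncurry_sndPrimitive hf'
  have hright : 𝓝[>] (0 : ℝ) ≤ 𝓝[≠] 0 := nhdsWithin_mono _ fun ε hε => ne_of_gt hε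
  have htotal := (tendsto_integral_inv_smul_increment
    (h := fun u => sndPrimitive f (A u) (G u)) (by fun_prop) 0 t).mono_left hright
  have hdrift := (tendsto_integral_inv_smul_partial_increment
    (hasDerivAt_sndPrimitive hf hfc hf') hF'c hA hG 0 t).mono_left hright
  have hremainder := tendsto_integral_inv_mul_trapezoid_sub_integral hf hf' hf2 hf2c hA hG ht hG3
  have hlim := hremainder.add (htotal.sub hdrift)
  simp only [zero_add, smul_eq_mul] at hlim
  simp only [mul_comm (sndPrimitive f' _ _)]
  refine hlim.congr fun ε => ?_
  simp only [← sndPrimitive_sub_sndPrimitive (hfc.uncurry_left _)]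
  rw [← intervalIntegral.integral_sub (Continuous.intervalIntegrable (by fun_prop) _ _)
    (Continuous.intervalIntegrable (by fun_prop) _ _),
    ← intervalIntegral.integral_add (Continuous.intervalIntegrable (by fun_prop) _ _)
    (Continuous.intervalIntegrable (by fun_prop) _ _)]
  refine intervalIntegral.integral_congr fun u _ => ?_
  ring

end Line

section Localization

variable {g : ℝ → ℝ} {t : ℝ}

/-- `g` has zero (strong) cubic variation on `[0, t]` in the sense of Russo and Vallois: the
regularity under which the trapezoidal remainder is negligible. As in `HasSymmInt`, the path is
frozen at time `t`. -/
def HasZeroCubicVariation (g : ℝ → ℝ) (t : ℝ) : Prop :=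
  Tendsto (fun ε : ℝ => ∫ u in (0 : ℝ)..t, |g (min (u + ε) t) - g u| ^ 3 / ε) (𝓝[>] 0) (𝓝 0)

theorem integral_comp_min_eq_integral_comp_projIcc (ht : 0 ≤ t) (Φ : ℝ → ℝ → ℝ) {ε : ℝ}
    (hε : 0 ≤ ε) :
    ∫ u in (0 : ℝ)..t, Φ (min (u + ε) t) u
      = ∫ u in (0 : ℝ)..t, Φ (projIcc 0 t ht (u + ε)) (projIcc 0 t ht u) := by
  refine intervalIntegral.integral_congr fun u hu => ?_
  rw [uIcc_of_le ht] at hu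
  have hshift : (projIcc 0 t ht (u + ε) : ℝ) = min (u + ε) t := by
    rw [coe_projIcc, min_comm, max_eq_right (le_min (add_nonneg hu.1 hε) ht)]
  simp only [hshift, projIcc_of_mem ht hu]

theorem integral_mul_deriv_comp_projIcc (ht : 0 ≤ t) (Φ : ℝ → ℝ) (a : ℝ → ℝ) :
    ∫ u in (0 : ℝ)..t, Φ (projIcc 0 t ht u) * deriv (fun v => a (projIcc 0 t ht v)) u
      = ∫ u in (0 : ℝ)..t, Φ u * deriv a u := by
  refine intervalIntegral.integral_congr_Ioo_of_le ht fun u hu => ?_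
  have heq : (fun v => a (projIcc 0 t ht v)) =ᶠ[𝓝 u] a := by
    filter_upwards [Icc_mem_nhds hu.1 hu.2] with v hv
    rw [projIcc_of_mem ht hv]
  simp only [projIcc_of_mem ht (Ioo_subset_Icc_self hu), heq.deriv_eq]

theorem hasSymmInt_iff_tendsto_projIcc (ht : 0 ≤ t) {f : ℝ → ℝ} {I : ℝ} :
    HasSymmInt f g t I ↔ Tendsto (fun ε : ℝ => ∫ u in (0 : ℝ)..t,
        (f (projIcc 0 t ht (u + ε)) + f (projIcc 0 t ht u)) / 2
          * ((g (projIcc 0 t ht (u + ε)) - g (projIcc 0 t ht u)) / ε)) (𝓝[>] 0) (𝓝 I) :=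
  tendsto_congr' <| eventually_mem_nhdsWithin.mono fun ε hε =>
    integral_comp_min_eq_integral_comp_projIcc ht
      (fun v u => (f v + f u) / 2 * ((g v - g u) / ε)) (le_of_lt hε)

theorem hasZeroCubicVariation_iff_tendsto_projIcc (ht : 0 ≤ t) :
    HasZeroCubicVariation g t ↔ Tendsto (fun ε : ℝ => ∫ u in (0 : ℝ)..t,
        |g (projIcc 0 t ht (u + ε)) - g (projIcc 0 t ht u)| ^ 3 / ε) (𝓝[>] 0) (𝓝 0) :=
  tendsto_congr' <| eventually_mem_nhdsWithin.mono fun ε hε =>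
    integral_comp_min_eq_integral_comp_projIcc ht
      (fun v u => |g v - g u| ^ 3 / ε) (le_of_lt hε)

end Localization

section Holder

theorem holderOnWith_of_dist_le {X Y : Type*} [PseudoMetricSpace X] [PseudoMetricSpace Y]
    {h : X → Y} {s : Set X} {C r : ℝ} (hr : 0 ≤ r)
    (hh : ∀ x ∈ s, ∀ y ∈ s, dist (h x) (h y) ≤ C * dist x y ^ r) :
    HolderOnWith C.toNNReal r.toNNReal h s := fun x hx y hy => by
  rw [edist_dist, edist_dist, Real.coe_toNNReal r hr, ENNReal.ofReal_rpow_of_nonneg dist_nonneg hr,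
    ← ENNReal.ofReal, ← ENNReal.ofReal_mul' (by positivity)]
  exact ENNReal.ofReal_le_ofReal (hh x hx y hy)

theorem hasZeroCubicVariation_of_holderOnWith {g : ℝ → ℝ} {t : ℝ} {C r : ℝ≥0} (ht : 0 ≤ t)
    (hr : 1 / 3 < r) (hg : HolderOnWith C r g (Icc 0 t)) : HasZeroCubicVariation g t := by
  have hr' : (0 : ℝ) < 3 * r - 1 := by
    have : (1 / 3 : ℝ) < r := mod_cast hr
    linarith
  have hpointwise : ∀ ε > 0, ∀ u ∈ Ι 0 t,
      ‖|g (min (u + ε) t) - g u| ^ 3 / ε‖ ≤ C ^ 3 * ε ^ (3 * r - 1 : ℝ) := fun ε hε u hu => by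
    rw [uIoc_of_le ht] at hu
    have hv : min (u + ε) t ∈ Icc 0 t := ⟨le_min (by linarith [hu.1]) ht, min_le_right _ _⟩
    have hdist : |min (u + ε) t - u| ≤ ε := by
      rw [abs_of_nonneg (sub_nonneg.2 (le_min (by linarith) hu.2))]
      linarith [min_le_left (u + ε) t]
    have hpow : (ε ^ (r : ℝ)) ^ 3 = ε ^ (3 * r - 1 : ℝ) * ε := by
      rw [← Real.rpow_mul_natCast hε.le, ← Real.rpow_add_one hε.ne']
      congr 1
      push_cast
      ring
    rw [Real.norm_of_nonneg (by positivity), div_le_iff₀ hε]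
    calc |g (min (u + ε) t) - g u| ^ 3
        ≤ (C * |min (u + ε) t - u| ^ (r : ℝ)) ^ 3 := by
          gcongr
          exact hg.dist_le hv (Ioc_subset_Icc_self hu)
      _ ≤ (C * ε ^ (r : ℝ)) ^ 3 := by gcongr
      _ = C ^ 3 * ε ^ (3 * r - 1 : ℝ) * ε := by rw [mul_pow, hpow, mul_assoc]
  have hlim : Tendsto (fun ε : ℝ => C ^ 3 * ε ^ (3 * r - 1 : ℝ) * |t - 0|) (𝓝[>] 0) (𝓝 0) := by
    have hc : Continuous fun ε : ℝ => C ^ 3 * ε ^ (3 * r - 1 : ℝ) * |t - 0| :=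
      (continuous_const.mul (Real.continuous_rpow_const hr'.le)).mul continuous_const
    simpa [Real.zero_rpow hr'.ne'] using (hc.tendsto 0).mono_left nhdsWithin_le_nhds
  exact squeeze_zero_norm' (eventually_mem_nhdsWithin.mono fun ε hε =>
    intervalIntegral.norm_integral_le_of_norm_le_const (hpointwise ε hε)) hlim

end Holder

theorem stmt1_general {t : ℝ} (ht : 0 ≤ t)
    {a : ℝ → ℝ} {K : ℝ≥0} (ha : LipschitzOnWith K a (Icc 0 t))
    {g : ℝ → ℝ} (hg : ContinuousOn g (Icc 0 t)) (hg3 : HasZeroCubicVariation g t)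
    {f : ℝ → ℝ → ℝ}
    (hfd1 : ∀ y : ℝ, Differentiable ℝ (fun x => f x y))
    (hfd2 : ∀ x : ℝ, Differentiable ℝ (f x))
    (hfd22 : ∀ x : ℝ, Differentiable ℝ (deriv (f x)))
    (hfc : Continuous fun p : ℝ × ℝ => f p.1 p.2)
    (hfc1 : Continuous fun p : ℝ × ℝ => deriv (fun x => f x p.2) p.1)
    (hfc22 : Continuous fun p : ℝ × ℝ => deriv (deriv (f p.1)) p.2) :
    HasSymmInt (fun u => f (a u) (g u)) g t
      ((∫ η in (0 : ℝ)..(g t), f (a t) η) - (∫ η in (0 : ℝ)..(g 0), f (a 0) η)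
        - ∫ u in (0 : ℝ)..t,
            (∫ η in (0 : ℝ)..(g u), deriv (fun x => f x η) (a u)) * deriv a u) := by
  have hA : LipschitzWith K fun u => a (projIcc 0 t ht u) := by
    have hcomp := ha.to_restrict.comp (LipschitzWith.projIcc ht)
    rwa [mul_one] at hcomp
  have hG : Continuous fun u => g (projIcc 0 t ht u) := hg.domRestrict.comp continuous_projIcc
  have hf2 : ∀ x, ContDiff ℝ 2 (f x) := fun x =>
    contDiff_succ_iff_deriv.2 ⟨hfd2 x, by simp, contDiff_one_iff_deriv.2
      ⟨hfd22 x, hfc22.comp (Continuous.prodMk_right x)⟩⟩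
  have hlim := tendsto_symmetric_integral (f' := fun x y => deriv (fun x => f x y) x)
    (fun x y => (hfd1 y x).hasDerivAt) hfc hfc1 hf2 hfc22 hA hG ht
    ((hasZeroCubicVariation_iff_tendsto_projIcc ht).1 hg3)
  rw [integral_mul_deriv_comp_projIcc ht
    (fun u => sndPrimitive (fun x y => deriv (fun x => f x y) x) (a u) (g u)),
    projIcc_left, projIcc_right] at hlim
  exact (hasSymmInt_iff_tendsto_projIcc ht).2 hlim

theorem stmt1
    (lam : ℝ) (hlam1 : 1/3 < lam) (hlam2 : lam < 1)
    (a : ℝ → ℝ) (K : NNReal) (ha : LipschitzOnWith K a (Set.Icc 0 1))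
    (g : ℝ → ℝ) (Cg : ℝ)
    (hg : ∀ s ∈ Set.Icc (0:ℝ) 1, ∀ t ∈ Set.Icc (0:ℝ) 1, |g t - g s| ≤ Cg * |t - s| ^ lam)
    (hg0 : g 0 = 0)
    (f : ℝ → ℝ → ℝ)
    (hfd1 : ∀ y : ℝ, Differentiable ℝ (fun x => f x y))
    (hfd2 : ∀ x : ℝ, Differentiable ℝ (f x))
    (hfd22 : ∀ x : ℝ, Differentiable ℝ (deriv (f x)))
    (hfc : Continuous fun p : ℝ × ℝ => f p.1 p.2)
    (hfc1 : Continuous fun p : ℝ × ℝ => deriv (fun x => f x p.2) p.1)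
    (hfc2 : Continuous fun p : ℝ × ℝ => deriv (f p.1) p.2)
    (hfc22 : Continuous fun p : ℝ × ℝ => deriv (deriv (f p.1)) p.2) :
    ∀ t ∈ Set.Icc (0:ℝ) 1,
      HasSymmInt (fun u => f (a u) (g u)) g t
        ((∫ η in (0:ℝ)..(g t), f (a t) η) - (∫ η in (0:ℝ)..(g 0), f (a 0) η)
          - ∫ u in (0:ℝ)..t,
              (∫ η in (0:ℝ)..(g u), deriv (fun x => f x η) (a u)) * deriv a u) := by
  intro t ht
  have hsub : Icc 0 t ⊆ Icc (0 : ℝ) 1 := Icc_subset_Icc_right ht.2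
  have hholder : HolderOnWith Cg.toNNReal lam.toNNReal g (Icc 0 t) :=
    (holderOnWith_of_dist_le (by linarith) fun u hu v hv => hg v hv u hu).mono hsub
  have hlam : 1 / 3 < lam.toNNReal := Real.lt_toNNReal_iff_coe_lt.2 (by simpa using hlam1)
  exact stmt1_general ht.1 (ha.mono hsub) (hholder.continuousOn (pos_of_gt hlam))
    (hasZeroCubicVariation_of_holderOnWith ht.1 hlam hholder) hfd1 hfd2 hfd22 hfc hfc1 hfc22
end

section
/- Let 1/3 < λ < 1, let a : [0,1] → ℝ be Lipschitz continuous, let g ∈ C^λ₀([0,1];ℝ), let t ∈ (0,1], and let f : ℝ² → ℝ be such that f, ∂₁f, ∂₂f and ∂₂²f exist and are continuous on ℝ². Then for any sequence of partitions 0 = t₀ < t₁ < ⋯ < t_n = t of [0,t] whose mesh max{t_k − t_{k−1} : k = 1,…,n} tends to 0, the trapezoidal Riemann sums Σ_{k=1}^n ((f(a_{t_{k−1}},g_{t_{k−1}}) + f(a_{t_k},g_{t_k}))/2)·(g_{t_k} − g_{t_{k−1}}) converge to the Russo–Vallois symmetric integral ∫₀^t f(a_u,g_u) d°g_u (which exists).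 -/
/-!
Let `F x y = ∫ z in 0..y, f x z` and let `H u = F (a u) (g u) - ∫ ∂₁F(a, g) da`, where the Lipschitz
function `a` is integrated through its almost everywhere derivative. A first-order expansion of `F`
in `x` shows that the increment of `H` over `[s, r]` is `∫ z in g s..g r, f (a s) z` up to
`o(r - s)`. The trapezoidal rule evaluates that integral with error `O(|g r - g s| ^ 3)`, which is
`o(r - s)` because a Hölder function `g` of exponent above `1 / 3` satisfies the little Hölder
condition of exponent `1 / 3`. So each trapezoid of `f (a, g)` against `g` is an increment of `H` up
to `o(r - s)`, uniformly. In the Riemann sums these errors add up to `o(t)`, and in the symmetric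
integral the error for the step `ε` is `o(ε) / ε`, so both converge to `H t - H 0`.
-/

open Asymptotics Filter MeasureTheory Metric Set
open scoped NNReal Topology Uniformity

section NearDiag

variable {X : Type*}

/-- The filter of pairs of points of `S` at small distance from each other. Asymptotic statements
along it hold uniformly in the base point, and `UniformContinuousOn` is convergence along it. -/
def nearDiag [UniformSpace X] (S : Set X) : Filter (X × X) :=
  𝓤 X ⊓ 𝓟 (S ×ˢ S)

lemma eventually_nearDiag_mem [UniformSpace X] (S : Set X) :
    ∀ᶠ q in nearDiag S, q.1 ∈ S ∧ q.2 ∈ S :=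
  mem_inf_of_right (mem_principal_self _)

lemma eventually_nearDiag_iff [PseudoMetricSpace X] {S : Set X} {P : X × X → Prop} :
    (∀ᶠ q in nearDiag S, P q) ↔
      ∃ δ > 0, ∀ s ∈ S, ∀ r ∈ S, dist s r < δ → P (s, r) := by
  rw [nearDiag, (uniformity_basis_dist.inf_principal _).eventually_iff]
  simp only [mem_inter_iff, mem_ofPred_eq, mem_prod, and_imp, Prod.forall]
  grind

lemma isBigO_fst_nearDiag_one [UniformSpace X] {ψ : X → ℝ} {S : Set X} (hS : IsCompact S)
    (hψ : ContinuousOn ψ S) :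
    (fun q => ψ q.1) =O[nearDiag S] fun _ => (1 : ℝ) :=
  (hψ.isBigO_principal hS (by simp)).comp_tendsto
    (tendsto_principal.2 ((eventually_nearDiag_mem S).mono fun _ hq => hq.1))

lemma isBigO_sub_of_lipschitzOnWith {E F : Type*} [SeminormedAddCommGroup E]
    [SeminormedAddCommGroup F] {a : E → F} {K : ℝ≥0} {S : Set E} (ha : LipschitzOnWith K a S) :
    (fun q => a q.2 - a q.1) =O[nearDiag S] fun q => q.2 - q.1 :=
  IsBigO.of_bound K ((eventually_nearDiag_mem S).mono fun _ hq => ha.norm_sub_le hq.2 hq.1)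

lemma tendsto_abs_sub_rpow_nearDiag {α : ℝ} (hα : 0 < α) (S : Set ℝ) :
    Tendsto (fun q : ℝ × ℝ => |q.2 - q.1| ^ α) (nearDiag S) (𝓝 0) := by
  have h : Tendsto (fun q : ℝ × ℝ => |q.2 - q.1|) (nearDiag S) (𝓝 0) := by
    have := (tendsto_uniformity_iff_dist_tendsto_zero.1 tendsto_id).mono_left
      (inf_le_left : nearDiag S ≤ 𝓤 ℝ)
    simpa only [Real.dist_eq, abs_sub_comm, id, nearDiag] using this
  simpa only [Real.zero_rpow hα.ne'] using h.rpow_const (Or.inr hα.le)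

end NearDiag

/-- The little Hölder condition of exponent `α`: `g r - g s = o(|r - s| ^ α)` uniformly on `S`. -/
def IsLittleHolderOn (α : ℝ) (g : ℝ → ℝ) (S : Set ℝ) : Prop :=
  (fun q => g q.2 - g q.1) =o[nearDiag S] fun q => |q.2 - q.1| ^ α

lemma isLittleHolderOn_of_abs_sub_le {α β C : ℝ} {g : ℝ → ℝ} {S : Set ℝ} (hα : 0 < α)
    (hαβ : α < β) (hg : ∀ s ∈ S, ∀ r ∈ S, |g r - g s| ≤ C * |r - s| ^ β) :
    IsLittleHolderOn α g S := by
  have hbig : (fun q => g q.2 - g q.1) =O[nearDiag S] fun q => |q.2 - q.1| ^ β := by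
    refine IsBigO.of_bound C ((eventually_nearDiag_mem S).mono fun q hq => ?_)
    simpa only [Real.norm_eq_abs, abs_of_nonneg (Real.rpow_nonneg (abs_nonneg _) β)]
      using hg q.1 hq.1 q.2 hq.2
  have hsplit : ∀ q : ℝ × ℝ, |q.2 - q.1| ^ β = |q.2 - q.1| ^ (β - α) * |q.2 - q.1| ^ α :=
    fun q => by
      rw [← Real.rpow_add_of_nonneg (abs_nonneg _) (sub_pos.2 hαβ).le hα.le, sub_add_cancel]
  refine hbig.trans_isLittleO ?_
  simpa only [hsplit, one_mul] using
    ((isLittleO_one_iff ℝ).2 (tendsto_abs_sub_rpow_nearDiag (sub_pos.2 hαβ) S)).mul_isBigO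
      (isBigO_refl (fun q : ℝ × ℝ => |q.2 - q.1| ^ α) (nearDiag S))

namespace IsLittleHolderOn

variable {α : ℝ} {g : ℝ → ℝ} {S : Set ℝ}

lemma tendsto_sub (hα : 0 < α) (hg : IsLittleHolderOn α g S) :
    Tendsto (fun q => g q.2 - g q.1) (nearDiag S) (𝓝 0) :=
  hg.trans_tendsto (tendsto_abs_sub_rpow_nearDiag hα S)

lemma continuousOn (hα : 0 < α) (hg : IsLittleHolderOn α g S) : ContinuousOn g S := by
  have : UniformContinuousOn g S := tendsto_uniformity_iff_dist_tendsto_zero.2 <| by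
    simpa only [Real.dist_eq, abs_sub_comm, abs_zero, nearDiag] using (hg.tendsto_sub hα).abs
  exact this.continuousOn

lemma cube_isLittleO (hg : IsLittleHolderOn (1 / 3) g S) :
    (fun q => (g q.2 - g q.1) ^ 3) =o[nearDiag S] fun q => q.2 - q.1 := by
  have hcube : ∀ q : ℝ × ℝ, (|q.2 - q.1| ^ (1 / 3 : ℝ)) ^ 3 = |q.2 - q.1| := fun q => by
    rw [← Real.rpow_mul_natCast (abs_nonneg _)]
    norm_num
  exact IsLittleO.of_abs_right (by simpa only [hcube] using hg.pow three_pos)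

end IsLittleHolderOn

/-- The area of the trapezoid with parallel sides `p q.1`, `p q.2` and signed width
`g q.2 - g q.1`: the term of a trapezoidal Riemann sum of `p` against `g` on `[q.1, q.2]`. -/
noncomputable def trapezoid (p g : ℝ → ℝ) (q : ℝ × ℝ) : ℝ :=
  (p q.1 + p q.2) / 2 * (g q.2 - g q.1)

lemma abs_integral_sub_trapezoid_le {h : ℝ → ℝ} (h1 : Differentiable ℝ h)
    (h2 : Differentiable ℝ (deriv h)) {x y M : ℝ}
    (hM : ∀ z ∈ uIcc x y, |deriv (deriv h) z| ≤ M) :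
    |(∫ z in x..y, h z) - trapezoid h id (x, y)| ≤ M / 12 * |y - x| ^ 3 := by
  rcases eq_or_ne x y with rfl | hxy
  · simp [trapezoid]
  have hM0 : 0 ≤ M := (abs_nonneg _).trans (hM x left_mem_uIcc)
  have hU : UniqueDiffOn ℝ (uIcc x y) := uniqueDiffOn_uIcc hxy
  have hd : EqOn (derivWithin h (uIcc x y)) (deriv h) (uIcc x y) := fun z hz =>
    (h1 z).derivWithin (hU z hz)
  have hdd : ∀ z, |iteratedDerivWithin 2 h (uIcc x y) z| ≤ M := fun z => by
    rw [iteratedDerivWithin_succ, iteratedDerivWithin_one]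
    by_cases hz : z ∈ uIcc x y
    · rw [derivWithin_congr hd (hd hz), (h2 z).derivWithin (hU z hz)]
      exact hM z hz
    · rwa [derivWithin_zero_of_notMem_closure (by rwa [isCompact_uIcc.isClosed.closure_eq]),
        abs_zero]
  have := trapezoidal_error_le h1.differentiableOn (h2.differentiableOn.congr hd) hdd one_pos
  rw [trapezoidal_error, trapezoidal_integral_one, abs_sub_comm] at this
  convert this using 1
  · simp only [trapezoid, id]
    ring_nf
  · ring

lemma isBigO_integral_sub_trapezoid {X Y : Type*} [UniformSpace X] [TopologicalSpace Y]
    {f : Y → ℝ → ℝ} {S : Set X} {a : X → Y} {g : X → ℝ}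
    (hf : ∀ y, Differentiable ℝ (f y)) (hf' : ∀ y, Differentiable ℝ (deriv (f y)))
    (hf'' : Continuous fun p : Y × ℝ => deriv (deriv (f p.1)) p.2) (hS : IsCompact S)
    (ha : ContinuousOn a S) (hg : ContinuousOn g S) :
    (fun q => (∫ z in g q.1..g q.2, f (a q.1) z) - trapezoid (f (a q.1)) id (g q.1, g q.2))
      =O[nearDiag S] fun q => (g q.2 - g q.1) ^ 3 := by
  obtain ⟨R, hR⟩ := (hS.image_of_continuousOn hg).isBounded.subset_closedBall 0
  have hball : OrdConnected (closedBall (0 : ℝ) R) := (convex_closedBall 0 R).ordConnected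
  obtain ⟨M, hM⟩ := ((hS.image_of_continuousOn ha).prod (isCompact_closedBall (0 : ℝ) R)
    ).exists_bound_of_continuousOn hf''.continuousOn
  refine IsBigO.of_bound (M / 12) ((eventually_nearDiag_mem S).mono fun q ⟨hs, hr⟩ => ?_)
  rw [norm_pow]
  refine abs_integral_sub_trapezoid_le (hf _) (hf' _) fun z hz =>
    hM (a q.1, z) ⟨mem_image_of_mem a hs, ?_⟩
  exact hball.uIcc_subset (hR (mem_image_of_mem g hs)) (hR (mem_image_of_mem g hr)) hz

section PartialDerivative

lemma hasDerivAt_intervalIntegral_of_continuous_partialDeriv {f f' : ℝ → ℝ → ℝ}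
    (hf : ∀ x, Continuous (f x)) (hff' : ∀ x z, HasDerivAt (fun w => f w z) (f' x z) x)
    (hf' : Continuous f'.uncurry) (u v x : ℝ) :
    HasDerivAt (fun w => ∫ z in u..v, f w z) (∫ z in u..v, f' x z) x := by
  obtain ⟨M, hM⟩ := ((isCompact_closedBall x 1).prod (isCompact_uIcc (a := u) (b := v))
    ).exists_bound_of_continuousOn hf'.continuousOn
  refine (intervalIntegral.hasDerivAt_integral_of_dominated_loc_of_deriv_le
    (closedBall_mem_nhds x one_pos) (.of_forall fun w => (hf w).aestronglyMeasurable)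
    ((hf x).intervalIntegrable u v) (hf'.uncurry_left x).aestronglyMeasurable ?_
    (intervalIntegrable_const (c := M)) (.of_forall fun z _ w _ => hff' w z)).2
  exact .of_forall fun z hz w hw => hM (w, z) ⟨hw, uIoc_subset_uIcc hz⟩

lemma abs_sub_sub_mul_le {h h' : ℝ → ℝ} {x y m η : ℝ} (hh' : ∀ w, HasDerivAt h (h' w) w)
    (hη : ∀ w ∈ uIcc x y, |h' w - m| ≤ η) :
    |h y - h x - m * (y - x)| ≤ η * |y - x| := by
  have hder : ∀ w ∈ uIcc x y, HasDerivWithinAt (fun w => h w - m * w) (h' w - m) (uIcc x y) w :=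
    fun w _ => by
      simpa only [mul_one, id] using
        ((hh' w).fun_sub ((hasDerivAt_id w).const_mul m)).hasDerivWithinAt
  have := (convex_uIcc x y).norm_image_sub_le_of_norm_hasDerivWithin_le hder hη
    left_mem_uIcc right_mem_uIcc
  rw [Real.norm_eq_abs, Real.norm_eq_abs] at this
  convert this using 2
  ring

variable {X Y : Type*} [PseudoMetricSpace X] [PseudoMetricSpace Y] {f f' : ℝ → Y → ℝ}
  {S : Set X} {a : X → ℝ} {b : X → Y}

lemma isLittleO_sub_sub_partialDeriv_mul (hff' : ∀ x y, HasDerivAt (fun w => f w y) (f' x y) x)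
    (hf' : Continuous f'.uncurry) (hS : IsCompact S) (ha : ContinuousOn a S)
    (hb : ContinuousOn b S) :
    (fun q => f (a q.2) (b q.2) - f (a q.1) (b q.2) - f' (a q.1) (b q.1) * (a q.2 - a q.1))
      =o[nearDiag S] fun q => a q.2 - a q.1 := by
  obtain ⟨R, hR⟩ := (hS.image_of_continuousOn ha).isBounded.subset_closedBall 0
  have hball : OrdConnected (closedBall (0 : ℝ) R) := (convex_closedBall 0 R).ordConnected
  have hunif : UniformContinuousOn f'.uncurry (closedBall 0 R ×ˢ (b '' S)) :=
    ((isCompact_closedBall (0 : ℝ) R).prod (hS.image_of_continuousOn hb)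
      ).uniformContinuousOn_of_continuous hf'.continuousOn
  have hau := hS.uniformContinuousOn_of_continuous ha
  have hbu := hS.uniformContinuousOn_of_continuous hb
  refine isLittleO_iff.2 fun η hη => ?_
  obtain ⟨δ, hδ, hf'δ⟩ := uniformContinuousOn_iff.1 hunif η hη
  filter_upwards [eventually_nearDiag_mem S, hau (dist_mem_uniformity hδ),
    hbu (dist_mem_uniformity hδ)] with ⟨s, r⟩ ⟨hs, hr⟩ hasr hbsr
  refine abs_sub_sub_mul_le (fun w => hff' w (b r)) fun w hw => (hf'δ (w, b r) ⟨?_, r, hr, rfl⟩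
    (a s, b s) ⟨hR ⟨s, hs, rfl⟩, s, hs, rfl⟩ (max_lt ?_ ?_)).le
  · exact hball.uIcc_subset (hR ⟨s, hs, rfl⟩) (hR ⟨r, hr, rfl⟩) hw
  · calc |w - a s| ≤ |a r - a s| := abs_sub_left_of_mem_uIcc hw
      _ < δ := by rw [abs_sub_comm]; exact hasr
  · rw [dist_comm]; exact hbsr

lemma isBigO_sub_of_continuous_partialDeriv (hff' : ∀ x y, HasDerivAt (fun w => f w y) (f' x y) x)
    (hf' : Continuous f'.uncurry) (hS : IsCompact S) (ha : ContinuousOn a S)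
    (hb : ContinuousOn b S) :
    (fun q => f (a q.2) (b q.2) - f (a q.1) (b q.2)) =O[nearDiag S] fun q => a q.2 - a q.1 := by
  have hbdd : (fun q => f' (a q.1) (b q.1)) =O[nearDiag S] fun _ => (1 : ℝ) :=
    isBigO_fst_nearDiag_one hS (hf'.comp_continuousOn (ha.prodMk hb))
  have hlin : (fun q => f' (a q.1) (b q.1) * (a q.2 - a q.1))
      =O[nearDiag S] fun q => a q.2 - a q.1 := by
    simpa only [one_mul] using hbdd.mul (isBigO_refl (fun q => a q.2 - a q.1) _)
  simpa only [sub_add_cancel] using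
    (isLittleO_sub_sub_partialDeriv_mul hff' hf' hS ha hb).isBigO.add hlin

end PartialDerivative

section LipschitzIntegrator

variable {ψ a : ℝ → ℝ} {K : ℝ≥0}

lemma abs_mul_sub_sub_integral_mul_deriv_le (ha : LipschitzWith K a) {s r η : ℝ}
    (hψ : ContinuousOn ψ (uIcc s r)) (hη : ∀ v ∈ uIcc s r, |ψ s - ψ v| ≤ η) :
    |ψ s * (a r - a s) - ∫ v in s..r, ψ v * deriv a v| ≤ η * K * |r - s| := by
  have hac : AbsolutelyContinuousOnInterval a s r :=
    ha.lipschitzOnWith.absolutelyContinuousOnInterval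
  have hint := hac.intervalIntegrable_deriv
  rw [← hac.integral_deriv_eq_sub, ← intervalIntegral.integral_const_mul,
    ← intervalIntegral.integral_sub (hint.const_mul _) (hint.continuousOn_mul hψ)]
  refine intervalIntegral.norm_integral_le_of_norm_le_const (E := ℝ) fun v hv => ?_
  have hv' := hη v (uIoc_subset_uIcc hv)
  rw [← sub_mul, norm_mul]
  exact mul_le_mul hv' (norm_deriv_le_of_lipschitz ha) (norm_nonneg _) ((abs_nonneg _).trans hv')

lemma exists_isLittleO_mul_sub_sub_of_lipschitzOnWith {c d : ℝ} (hcd : c ≤ d)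
    (ha : LipschitzOnWith K a (Icc c d)) (hψ : ContinuousOn ψ (Icc c d)) :
    ∃ G : ℝ → ℝ, ContinuousOn G (Icc c d) ∧
      (fun q => ψ q.1 * (a q.2 - a q.1) - (G q.2 - G q.1)) =o[nearDiag (Icc c d)]
        fun q => q.2 - q.1 := by
  obtain ⟨A, hA, haA⟩ := ha.extend_real
  rw [← uIcc_of_le hcd] at *
  have hint : ∀ s ∈ uIcc c d, ∀ r ∈ uIcc c d,
      IntervalIntegrable (fun v => ψ v * deriv A v) volume s r := fun s hs r hr =>
    hA.lipschitzOnWith.absolutelyContinuousOnInterval.intervalIntegrable_deriv.continuousOn_mul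
      (hψ.mono (uIcc_subset_uIcc hs hr))
  refine ⟨fun u => ∫ v in c..u, ψ v * deriv A v,
    intervalIntegral.continuousOn_primitive_interval'
      (hint c left_mem_uIcc d right_mem_uIcc) left_mem_uIcc, ?_⟩
  refine isLittleO_iff.2 fun η hη => eventually_nearDiag_iff.2 ?_
  obtain ⟨δ, hδ, hψδ⟩ := uniformContinuousOn_iff.1
    (isCompact_uIcc.uniformContinuousOn_of_continuous hψ) (η / (K + 1)) (by positivity)
  refine ⟨δ, hδ, fun s hs r hr hsr => ?_⟩
  have hsub : uIcc s r ⊆ uIcc c d := uIcc_subset_uIcc hs hr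
  have hosc : ∀ v ∈ uIcc s r, |ψ s - ψ v| ≤ η / (K + 1) := fun v hv => by
    refine (hψδ s hs v (hsub hv) ?_).le
    rw [dist_comm]
    exact (abs_sub_left_of_mem_uIcc hv).trans_lt (by rwa [dist_comm] at hsr)
  have hηK : η / (K + 1) * K ≤ η := by
    rw [div_mul_eq_mul_div, div_le_iff₀ (by positivity)]
    nlinarith
  rw [intervalIntegral.integral_interval_sub_left (hint c left_mem_uIcc r hr)
    (hint c left_mem_uIcc s hs), haA hr, haA hs]
  exact (abs_mul_sub_sub_integral_mul_deriv_le hA (hψ.mono hsub) hosc).trans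
    (mul_le_mul_of_nonneg_right hηK (abs_nonneg _))

end LipschitzIntegrator

/-- `H` is a primitive of `p` against `g` on `S` for the trapezoidal rule: the trapezoid of `p` and
`g` over `[s, r]` is `H r - H s` up to `o(r - s)`, uniformly on `S`. -/
def IsTrapezoidalPrimitiveOn (p g H : ℝ → ℝ) (S : Set ℝ) : Prop :=
  (fun q => trapezoid p g q - (H q.2 - H q.1)) =o[nearDiag S] fun q => q.2 - q.1

theorem exists_isTrapezoidalPrimitiveOn {c d : ℝ} (hcd : c ≤ d) {a g : ℝ → ℝ} {K : ℝ≥0}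
    (ha : LipschitzOnWith K a (Icc c d)) (hg : IsLittleHolderOn (1 / 3) g (Icc c d))
    {f f' : ℝ → ℝ → ℝ} (hff' : ∀ x y, HasDerivAt (fun w => f w y) (f' x y) x)
    (hfd2 : ∀ x, Differentiable ℝ (f x)) (hfd22 : ∀ x, Differentiable ℝ (deriv (f x)))
    (hfc : Continuous f.uncurry) (hf' : Continuous f'.uncurry)
    (hfc22 : Continuous fun p : ℝ × ℝ => deriv (deriv (f p.1)) p.2) :
    ∃ H : ℝ → ℝ, ContinuousOn H (Icc c d) ∧
      IsTrapezoidalPrimitiveOn (fun u => f (a u) (g u)) g H (Icc c d) := by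
  let F : ℝ → ℝ → ℝ := fun x y => ∫ z in (0 : ℝ)..y, f x z
  let F' : ℝ → ℝ → ℝ := fun x y => ∫ z in (0 : ℝ)..y, f' x z
  have hF : Continuous F.uncurry :=
    intervalIntegral.continuous_parametric_primitive_of_continuous hfc
  have hF' : Continuous F'.uncurry :=
    intervalIntegral.continuous_parametric_primitive_of_continuous hf'
  have hFF' : ∀ x y, HasDerivAt (fun w => F w y) (F' x y) x := fun x y =>
    hasDerivAt_intervalIntegral_of_continuous_partialDeriv (fun x => hfc.uncurry_left x) hff' hf' 0
      y x
  have hac := ha.continuousOn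
  have hgc := hg.continuousOn (by norm_num)
  have hag := hac.prodMk hgc
  have hΔa := isBigO_sub_of_lipschitzOnWith ha
  obtain ⟨G, hG, hGa⟩ := exists_isLittleO_mul_sub_sub_of_lipschitzOnWith hcd ha
    (hF'.comp_continuousOn hag)
  refine ⟨fun u => F (a u) (g u) - G u, (hF.comp_continuousOn hag).sub hG, ?_⟩
  have hFa := (isLittleO_sub_sub_partialDeriv_mul hFF' hF' isCompact_Icc hac hgc).trans_isBigO hΔa
  have hFg := (isBigO_integral_sub_trapezoid hfd2 hfd22 hfc22 isCompact_Icc hac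
    hgc).trans_isLittleO hg.cube_isLittleO
  have hmixed : (fun q => (f (a q.2) (g q.2) - f (a q.1) (g q.2)) * (g q.2 - g q.1))
      =o[nearDiag (Icc c d)] fun q => q.2 - q.1 := by
    simpa only [mul_one] using ((isBigO_sub_of_continuous_partialDeriv hff' hf' isCompact_Icc hac
      hgc).trans hΔa).mul_isLittleO ((isLittleO_one_iff ℝ).2 (hg.tendsto_sub (by norm_num)))
  refine (((hmixed.const_mul_left (1 / 2)).sub hFg).sub (hFa.add hGa)).congr_left fun q => ?_
  have hFsub : F (a q.1) (g q.2) - F (a q.1) (g q.1) = ∫ z in g q.1..g q.2, f (a q.1) z :=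
    intervalIntegral.integral_interval_sub_left ((hfd2 _).continuous.intervalIntegrable _ _)
      ((hfd2 _).continuous.intervalIntegrable _ _)
  simp only [← hFsub, trapezoid, Function.comp_apply, Function.uncurry_apply_pair, id]
  ring

lemma mapsTo_min_add_Icc {ε t : ℝ} (hε : 0 ≤ ε) :
    MapsTo (fun u => min (u + ε) t) (Icc 0 t) (Icc 0 t) := fun _ hu =>
  ⟨le_min (add_nonneg hu.1 hε) (hu.1.trans hu.2), min_le_right _ _⟩

lemma intervalIntegrable_symmInt_integrand {p g : ℝ → ℝ} {ε t : ℝ} (hε : 0 ≤ ε) (ht : 0 ≤ t)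
    (hp : ContinuousOn p (Icc 0 t)) (hg : ContinuousOn g (Icc 0 t)) :
    IntervalIntegrable
      (fun u => (p (min (u + ε) t) + p u) / 2 * ((g (min (u + ε) t) - g u) / ε)) volume 0 t := by
  have hmin : ContinuousOn (fun u => min (u + ε) t) (Icc 0 t) := by fun_prop
  have hmaps := mapsTo_min_add_Icc (t := t) hε
  refine ContinuousOn.intervalIntegrable_of_Icc ht ?_
  exact (((hp.comp hmin hmaps).add hp).div_const 2).mul
    (((hg.comp hmin hmaps).sub hg).div_const ε)

lemma integral_comp_add_right_sub_self {E : ℝ → ℝ} (hE : Continuous E) (c d ε : ℝ) :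
    ∫ u in c..d, (E (u + ε) - E u) = (∫ u in d..d + ε, E u) - ∫ u in c..c + ε, E u := by
  have hEi : ∀ u v, IntervalIntegrable E volume u v := hE.intervalIntegrable
  have hshift : Continuous fun u => E (u + ε) := by fun_prop
  rw [intervalIntegral.integral_sub (hshift.intervalIntegrable _ _) (hEi _ _),
    intervalIntegral.integral_comp_add_right,
    intervalIntegral.integral_interval_sub_interval_comm' (hEi _ _) (hEi _ _) (hEi _ _)]

lemma hasSymmInt_one_left {H : ℝ → ℝ} {t : ℝ} (ht : 0 ≤ t) (hH : ContinuousOn H (Icc 0 t)) :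
    HasSymmInt (fun _ => 1) H t (H t - H 0) := by
  let E : ℝ → ℝ := IccExtend ht fun u => H u
  have hE : Continuous E := (continuousOn_iff_continuous_domRestrict.1 hH).Icc_extend'
  have hEH : EqOn E H (Icc 0 t) := fun u hu => IccExtend_of_mem ht (fun u => H u) hu
  -- Extending `H` by the constant `H t` beyond `t` turns the truncated shift `min (u + ε) t` into
  -- a translation.
  have hshift : ∀ ε > 0, ∀ u ∈ Icc 0 t, E (u + ε) = H (min (u + ε) t) := fun ε hε u hu => by
    rcases le_total (u + ε) t with h | h
    · rw [min_eq_left h, hEH ⟨add_nonneg hu.1 hε.le, h⟩]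
    · rw [min_eq_right h]
      exact IccExtend_of_right_le ht (fun u => H u) h
  have hderiv : ∀ x, Tendsto (fun ε => ε⁻¹ * ∫ u in x..x + ε, E u) (𝓝[>] 0) (𝓝 (E x)) :=
    fun x => by
      simpa only [intervalIntegral.integral_same, sub_zero, smul_eq_mul] using
        (hE.integral_hasStrictDerivAt x x).hasDerivAt.tendsto_slope_zero_right
  rw [← hEH (right_mem_Icc.2 ht), ← hEH (left_mem_Icc.2 ht)]
  refine ((hderiv t).sub (hderiv 0)).congr' ?_
  filter_upwards [self_mem_nhdsWithin] with ε hε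
  rw [← mul_sub, ← integral_comp_add_right_sub_self hE, ← intervalIntegral.integral_const_mul]
  refine intervalIntegral.integral_congr fun u hu => ?_
  rw [uIcc_of_le ht] at hu
  simp only [hshift ε hε u hu, hEH hu]
  ring

namespace IsTrapezoidalPrimitiveOn

variable {p g H : ℝ → ℝ}

theorem hasSymmInt {t : ℝ} (ht : 0 ≤ t)
    (hp : ContinuousOn p (Icc 0 t)) (hg : ContinuousOn g (Icc 0 t)) (hH : ContinuousOn H (Icc 0 t))
    (h : IsTrapezoidalPrimitiveOn p g H (Icc 0 t)) : HasSymmInt p g t (H t - H 0) := by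
  refine (hasSymmInt_one_left ht hH).congr_dist (Metric.tendsto_nhds.2 fun η hη => ?_)
  obtain ⟨δ, hδ, hbound⟩ := eventually_nearDiag_iff.1
    (isLittleO_iff.1 h (c := η / (t + 1)) (by positivity))
  filter_upwards [Ioo_mem_nhdsGT hδ] with ε ⟨hε, hεδ⟩
  rw [dist_comm (∫ _ in _.._, _), dist_zero_right, Real.norm_of_nonneg dist_nonneg, dist_eq_norm,
    ← intervalIntegral.integral_sub (intervalIntegrable_symmInt_integrand hε.le ht hp hg)
      (intervalIntegrable_symmInt_integrand hε.le ht continuousOn_const hH)]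
  have hpoint : ∀ u ∈ Icc 0 t,
      |(p (min (u + ε) t) + p u) / 2 * ((g (min (u + ε) t) - g u) / ε)
        - (1 + 1) / 2 * ((H (min (u + ε) t) - H u) / ε)| ≤ η / (t + 1) := fun u hu => by
    have hstep : |min (u + ε) t - u| ≤ ε := by
      rw [abs_of_nonneg (sub_nonneg.2 (le_min (le_add_of_nonneg_right hε.le) hu.2))]
      linarith [min_le_left (u + ε) t]
    have hu' := hbound u hu _ (mapsTo_min_add_Icc hε.le hu)
      (by rw [dist_comm]; exact hstep.trans_lt hεδ)
    calc _ = |trapezoid p g (u, min (u + ε) t) - (H (min (u + ε) t) - H u)| / ε := by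
          rw [← abs_of_pos hε, ← abs_div, abs_of_pos hε, trapezoid]
          ring_nf
      _ ≤ η / (t + 1) := (div_le_iff₀ hε).2
          (hu'.trans (mul_le_mul_of_nonneg_left hstep (by positivity)))
  calc _ ≤ η / (t + 1) * |t - 0| :=
        intervalIntegral.norm_integral_le_of_norm_le_const fun u hu =>
          hpoint u (uIcc_of_le ht ▸ uIoc_subset_uIcc hu)
    _ < η := by
        rw [sub_zero, abs_of_nonneg ht, div_mul_eq_mul_div, div_lt_iff₀ (by positivity)]
        linarith

theorem abs_sum_trapezoid_sub_lt {c d : ℝ} (h : IsTrapezoidalPrimitiveOn p g H (Icc c d)) {ε : ℝ}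
    (hε : 0 < ε) :
    ∃ δ > 0, ∀ (n : ℕ) (pts : ℕ → ℝ), pts 0 = c → pts n = d → (∀ k < n, pts k < pts (k + 1)) →
      (∀ k < n, pts (k + 1) - pts k < δ) →
      |(∑ k ∈ Finset.range n, trapezoid p g (pts k, pts (k + 1))) - (H d - H c)| < ε := by
  obtain ⟨δ, hδ, hbound⟩ := eventually_nearDiag_iff.1
    (isLittleO_iff.1 h (c := ε / (|d - c| + 1)) (by positivity))
  refine ⟨δ, hδ, fun n pts hc hd hlt hmesh => ?_⟩
  have hmono := (strictMonoOn_Iic_of_lt_succ hlt).monotoneOn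
  have hmem : ∀ k ≤ n, pts k ∈ Icc c d := fun k hk =>
    ⟨hc ▸ hmono n.zero_le hk k.zero_le, hd ▸ hmono hk self_mem_Iic hk⟩
  have hterm : ∀ k ∈ Finset.range n,
      |trapezoid p g (pts k, pts (k + 1)) - (H (pts (k + 1)) - H (pts k))|
        ≤ ε / (|d - c| + 1) * (pts (k + 1) - pts k) := fun k hk => by
    have hk := Finset.mem_range.1 hk
    have hpos := sub_pos.2 (hlt k hk)
    simpa only [Real.norm_eq_abs, abs_of_pos hpos] using hbound (pts k) (hmem k hk.le) _
      (hmem (k + 1) hk) (by rw [dist_comm, Real.dist_eq, abs_of_pos hpos]; exact hmesh k hk)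
  rw [← hc, ← hd, ← Finset.sum_range_sub (fun k => H (pts k)), ← Finset.sum_sub_distrib]
  calc _ ≤ ∑ k ∈ Finset.range n, ε / (|d - c| + 1) * (pts (k + 1) - pts k) :=
        (Finset.abs_sum_le_sum_abs _ _).trans (Finset.sum_le_sum hterm)
    _ = ε / (|d - c| + 1) * (d - c) := by
        rw [← Finset.mul_sum, Finset.sum_range_sub pts, hc, hd]
    _ < ε := by
        rw [div_mul_eq_mul_div, div_lt_iff₀ (by positivity)]
        nlinarith [le_abs_self (d - c)]

end IsTrapezoidalPrimitiveOn

theorem stmt2_general {t : ℝ} (ht : 0 ≤ t) {a g : ℝ → ℝ} {K : ℝ≥0}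
    (ha : LipschitzOnWith K a (Icc 0 t)) (hg : IsLittleHolderOn (1 / 3) g (Icc 0 t))
    {f : ℝ → ℝ → ℝ} (hfd1 : ∀ y : ℝ, Differentiable ℝ (fun x => f x y))
    (hfd2 : ∀ x : ℝ, Differentiable ℝ (f x))
    (hfd22 : ∀ x : ℝ, Differentiable ℝ (deriv (f x)))
    (hfc : Continuous fun p : ℝ × ℝ => f p.1 p.2)
    (hfc1 : Continuous fun p : ℝ × ℝ => deriv (fun x => f x p.2) p.1)
    (hfc22 : Continuous fun p : ℝ × ℝ => deriv (deriv (f p.1)) p.2) :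
    ∃ I : ℝ, HasSymmInt (fun u => f (a u) (g u)) g t I ∧
      ∀ ε > (0:ℝ), ∃ δ > (0:ℝ), ∀ (n : ℕ) (pts : ℕ → ℝ),
        0 < n → pts 0 = 0 → pts n = t →
        (∀ k < n, pts k < pts (k + 1)) →
        (∀ k < n, pts (k + 1) - pts k < δ) →
        |(∑ k ∈ Finset.range n,
            ((f (a (pts k)) (g (pts k)) + f (a (pts (k + 1))) (g (pts (k + 1)))) / 2)
              * (g (pts (k + 1)) - g (pts k))) - I| < ε := by
  obtain ⟨H, hH, h⟩ := exists_isTrapezoidalPrimitiveOn ht ha hg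
    (f' := fun x y => deriv (fun w => f w y) x) (fun x y => (hfd1 y x).hasDerivAt)
    hfd2 hfd22 hfc hfc1 hfc22
  have hgc := hg.continuousOn (by norm_num)
  have hp : ContinuousOn (fun u => f (a u) (g u)) (Icc 0 t) :=
    hfc.comp_continuousOn (ha.continuousOn.prodMk hgc)
  refine ⟨H t - H 0, h.hasSymmInt ht hp hgc hH, fun ε hε => ?_⟩
  obtain ⟨δ, hδ, hsum⟩ := h.abs_sum_trapezoid_sub_lt hε
  exact ⟨δ, hδ, fun n pts _ => hsum n pts⟩

theorem stmt2
    (lam : ℝ) (hlam1 : 1/3 < lam) (hlam2 : lam < 1)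
    (a : ℝ → ℝ) (K : NNReal) (ha : LipschitzOnWith K a (Set.Icc 0 1))
    (g : ℝ → ℝ) (Cg : ℝ)
    (hg : ∀ s ∈ Set.Icc (0:ℝ) 1, ∀ t ∈ Set.Icc (0:ℝ) 1, |g t - g s| ≤ Cg * |t - s| ^ lam)
    (hg0 : g 0 = 0)
    (t : ℝ) (ht0 : 0 < t) (ht1 : t ≤ 1)
    (f : ℝ → ℝ → ℝ)
    (hfd1 : ∀ y : ℝ, Differentiable ℝ (fun x => f x y))
    (hfd2 : ∀ x : ℝ, Differentiable ℝ (f x))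
    (hfd22 : ∀ x : ℝ, Differentiable ℝ (deriv (f x)))
    (hfc : Continuous fun p : ℝ × ℝ => f p.1 p.2)
    (hfc1 : Continuous fun p : ℝ × ℝ => deriv (fun x => f x p.2) p.1)
    (hfc2 : Continuous fun p : ℝ × ℝ => deriv (f p.1) p.2)
    (hfc22 : Continuous fun p : ℝ × ℝ => deriv (deriv (f p.1)) p.2) :
    ∃ I : ℝ, HasSymmInt (fun u => f (a u) (g u)) g t I ∧
      ∀ ε > (0:ℝ), ∃ δ > (0:ℝ), ∀ (n : ℕ) (pts : ℕ → ℝ),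
        0 < n → pts 0 = 0 → pts n = t →
        (∀ k < n, pts k < pts (k + 1)) →
        (∀ k < n, pts (k + 1) - pts k < δ) →
        |(∑ k ∈ Finset.range n,
            ((f (a (pts k)) (g (pts k)) + f (a (pts (k + 1))) (g (pts (k + 1)))) / 2)
              * (g (pts (k + 1)) - g (pts k))) - I| < ε := by
  have ht : Set.Icc 0 t ⊆ Set.Icc 0 1 := Icc_subset_Icc_right ht1
  exact stmt2_general ht0.le (ha.mono ht) (isLittleHolderOn_of_abs_sub_le (by norm_num) hlam1
    fun s hs r hr => hg s (ht hs) r (ht hr)) hfd1 hfd2 hfd22 hfc hfc1 hfc22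
end
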